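/- arXiv:1706.06479 — 4 statements merged into one kernel-verified Lean document; each statement's English description precedes it below -/
import Mathlib

section
/- Equivalence of magnetic and free gradients in dyadic-weighted norms: there is a universal constant C such that for every measurable A : ℝ³ → ℝ³ with ‖A‖_{ℓ^∞L³} < ∞ and every v ∈ 𝒮(ℝ³;ℂ⁴), one has ‖∇v‖_Ẏ ≤ C (1 + ‖A‖_{ℓ^∞L³}) ( ‖∂^A v‖_Ẏ + ‖v‖_Ẋ ). -/
open MeasureTheory Metric Complex
open scoped ENNReal

noncomputable section

abbrev E3 := EuclideanSpace ℝ (Fin 3)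
abbrev C4 := Fin 4 → ℂ

def e3 (j : Fin 3) : E3 := EuclideanSpace.single j 1

def partialD (j : Fin 3) (f : E3 → C4) (x : E3) : C4 :=
  fun k => fderiv ℝ (fun y => f y k) x (e3 j)

def normSq4 (z : C4) : ℝ := ∑ k, Complex.normSq (z k)

/-- the magnetic derivative ∂ⱼᴬ = ∂ⱼ + iAⱼ -/
def dMag (A : E3 → Fin 3 → ℝ) (j : Fin 3) (f : E3 → C4) : E3 → C4 :=
  fun x => partialD j f x + (Complex.I * (A x j : ℝ)) • f x

def ann (j : ℤ) : Set E3 := {x | (2:ℝ)^j ≤ ‖x‖ ∧ ‖x‖ < (2:ℝ)^(j+1)}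

/-- the dyadic ℓ^∞L³ norm of a vector field -/
def linfL3 (A : E3 → Fin 3 → ℝ) : ℝ≥0∞ :=
  ⨆ j : ℤ, eLpNorm (fun x => Real.sqrt (∑ i : Fin 3, (A x i)^2)) 3 (volume.restrict (ann j))

/-- the integral of `g` over the sphere of radius `r` with respect to surface measure -/
def sphInt (g : E3 → ℝ≥0∞) (r : ℝ) : ℝ≥0∞ :=
  ENNReal.ofReal (r^2) *
    ∫⁻ ω : Metric.sphere (0 : E3) 1, g (r • (ω : E3)) ∂((volume : Measure E3).toSphere)

/-- squared Ẋ norm -/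
def Xnorm2 (g : E3 → ℝ≥0∞) : ℝ≥0∞ :=
  ⨆ (R : ℝ) (_ : 0 < R), (ENNReal.ofReal (R^2))⁻¹ * sphInt g R

/-- squared Ẏ norm -/
def Ynorm2 (g : E3 → ℝ≥0∞) : ℝ≥0∞ :=
  ⨆ (R : ℝ) (_ : 0 < R), (ENNReal.ofReal R)⁻¹ * ∫⁻ x in {x : E3 | ‖x‖ ≤ R}, g x

/-!
The term `iAw` in `∂ᴬw = ∂w + iAw` is pointwise orthogonal to `w` for the real inner product.
Hence `|∂|w|| ≤ |∂ᴬw|` (the diamagnetic inequality), and the scalar Sobolev inequality on balls,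
applied to `|w|`, bounds `‖w‖_{L⁶(|x| ≤ R)}` by a multiple of `√R (‖∂ᴬw‖_Ẏ + ‖w‖_Ẋ)`. Hölder's
inequality `L³ · L⁶ ⊆ L²` on each dyadic annulus followed by summation of a geometric series gives
`‖Aw‖_Ẏ ≲ ‖A‖_{ℓ^∞L³} (‖∂ᴬw‖_Ẏ + ‖w‖_Ẋ)`, and `∂w = ∂ᴬw - iAw`.
-/

open Module Set Filter Topology
open scoped NNReal

section Sobolev

variable (E : Type*) [NormedAddCommGroup E] [NormedSpace ℝ E] [FiniteDimensional ℝ E]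

lemma exists_norm_fderiv_contDiffBump_le :
    ∃ M : ℝ≥0, ∀ {c : E} (φ : ContDiffBump c), φ.rOut = 2 * φ.rIn →
      ∀ x, ‖fderiv ℝ φ x‖ ≤ φ.rIn⁻¹ * M := by
  let ψ : ContDiffBump (0 : E) := ⟨1, 2, one_pos, one_lt_two⟩
  obtain ⟨M, hM⟩ := (ψ.hasCompactSupport.fderiv (𝕜 := ℝ)).exists_bound_of_continuous
    (ψ.contDiff.continuous_fderiv one_ne_zero)
  refine ⟨⟨M, (norm_nonneg _).trans (hM 0)⟩, fun {c} φ hφ x => ?_⟩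
  have rescale : (φ : E → ℝ) = fun y => ψ (φ.rIn⁻¹ • (y - c)) := by
    ext y
    simp [ψ, ContDiffBump.apply, hφ, φ.rIn_pos.ne']
  have hderiv : fderiv ℝ φ x = φ.rIn⁻¹ • fderiv ℝ ψ (φ.rIn⁻¹ • (x - c)) := by
    rw [rescale, fderiv_comp_sub (f := fun y => ψ (φ.rIn⁻¹ • y)), fderiv_comp_smul]
  rw [hderiv, norm_smul, Real.norm_of_nonneg (inv_nonneg.2 φ.rIn_pos.le)]
  exact mul_le_mul_of_nonneg_left (hM _) (inv_nonneg.2 φ.rIn_pos.le)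

variable {E} {F : Type*} [NormedAddCommGroup F] [NormedSpace ℝ F]

lemma norm_fderiv_contDiffBump_smul_le {c : E} (φ : ContDiffBump c) {u : E → F} {x : E}
    (hu : DifferentiableAt ℝ u x) :
    ‖fderiv ℝ (fun y => φ y • u y) x‖ ≤ ‖fderiv ℝ u x‖ + ‖fderiv ℝ φ x‖ * ‖u x‖ := by
  rw [fderiv_fun_smul (φ.contDiffAt.differentiableAt one_ne_zero) hu]
  refine (norm_add_le _ _).trans (add_le_add ?_ ?_)
  · rw [norm_smul, Real.norm_of_nonneg φ.nonneg]
    exact mul_le_of_le_one_left (norm_nonneg _) φ.le_one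
  · exact (ContinuousLinearMap.norm_smulRight_apply _ _).le

variable [MeasurableSpace E] [BorelSpace E] (μ : Measure E)

lemma eLpNorm_fderiv_contDiffBump_smul_le {p : ℝ≥0∞} (hp : 1 ≤ p) {c : E} (φ : ContDiffBump c)
    {M : ℝ≥0} (hM : ∀ x, ‖fderiv ℝ φ x‖ ≤ M) {u : E → F} (hu : ContDiff ℝ 1 u) :
    eLpNorm (fderiv ℝ fun x => φ x • u x) p μ ≤
      eLpNorm (fderiv ℝ u) p (μ.restrict (closedBall c φ.rOut)) +
        M * eLpNorm u p (μ.restrict (closedBall c φ.rOut)) := by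
  have hsupp : Function.support (fderiv ℝ fun x => φ x • u x) ⊆ closedBall c φ.rOut := by
    rw [← φ.tsupport_eq]
    exact (support_fderiv_subset ℝ).trans (tsupport_smul_subset_left φ u)
  have hu' : Continuous (fderiv ℝ u) := hu.continuous_fderiv one_ne_zero
  rw [← eLpNorm_restrict_eq_of_support_subset (f := fderiv ℝ fun x => φ x • u x) hsupp]
  calc _ ≤ eLpNorm ((fun x => ‖fderiv ℝ u x‖) + (M : ℝ) • fun x => ‖u x‖) p
          (μ.restrict (closedBall c φ.rOut)) := by
        refine eLpNorm_mono_real fun x => ?_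
        refine (norm_fderiv_contDiffBump_smul_le φ (hu.differentiable one_ne_zero x)).trans ?_
        simp only [Pi.add_apply, Pi.smul_apply, smul_eq_mul]
        gcongr
        exact hM x
    _ ≤ _ := by
        refine (eLpNorm_add_le hu'.norm.aestronglyMeasurable
          (hu.continuous.norm.const_smul _).aestronglyMeasurable hp).trans ?_
        rw [eLpNorm_const_smul, eLpNorm_norm, eLpNorm_norm, Real.enorm_of_nonneg M.coe_nonneg,
          ENNReal.ofReal_coe_nnreal]

theorem exists_eLpNorm_closedBall_le_eLpNorm_fderiv [μ.IsAddHaarMeasure] (F : Type*)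
    [NormedAddCommGroup F] [InnerProductSpace ℝ F] [CompleteSpace F] {p p' : ℝ≥0} (hp : 1 ≤ p)
    (hE : 0 < finrank ℝ E) (hp' : (p' : ℝ)⁻¹ = (p : ℝ)⁻¹ - (finrank ℝ E : ℝ)⁻¹) :
    ∃ K : ℝ≥0, ∀ u : E → F, ContDiff ℝ 1 u → ∀ (c : E) (R : ℝ), 0 < R →
      eLpNorm u p' (μ.restrict (closedBall c R)) ≤
        K * (eLpNorm (fderiv ℝ u) p (μ.restrict (closedBall c (2 * R))) +
          ENNReal.ofReal R⁻¹ * eLpNorm u p (μ.restrict (closedBall c (2 * R)))) := by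
  obtain ⟨M, hM⟩ := exists_norm_fderiv_contDiffBump_le E
  set K := eLpNormLESNormFDerivOfEqInnerConst μ p
  refine ⟨K * max 1 M, fun u hu c R hR => ?_⟩
  let φ : ContDiffBump c := ⟨R, 2 * R, hR, by linarith⟩
  have hφ (x : E) : ‖fderiv ℝ φ x‖ ≤ (R⁻¹.toNNReal * M : ℝ≥0) := by
    simpa [Real.coe_toNNReal _ (inv_nonneg.2 hR.le)] using hM φ rfl x
  set B := μ.restrict (closedBall c (2 * R))
  calc eLpNorm u p' (μ.restrict (closedBall c R))
      = eLpNorm (fun x => φ x • u x) p' (μ.restrict (closedBall c R)) := by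
        refine eLpNorm_congr_ae (ae_restrict_of_forall_mem measurableSet_closedBall fun x hx => ?_)
        simp [φ.one_of_mem_closedBall hx]
    _ ≤ eLpNorm (fun x => φ x • u x) p' μ := eLpNorm_restrict_le _ _ _ _
    _ ≤ K * eLpNorm (fderiv ℝ fun x => φ x • u x) p μ :=
        eLpNorm_le_eLpNorm_fderiv_of_eq_inner μ (φ.contDiff.smul hu)
          φ.hasCompactSupport.smul_right hp hE hp'
    _ ≤ K * (eLpNorm (fderiv ℝ u) p B + (R⁻¹.toNNReal * M : ℝ≥0) * eLpNorm u p B) := by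
        gcongr
        exact eLpNorm_fderiv_contDiffBump_smul_le μ (mod_cast hp) φ hφ hu
    _ ≤ K * (max 1 M * eLpNorm (fderiv ℝ u) p B +
          (R⁻¹.toNNReal * max 1 M : ℝ≥0) * eLpNorm u p B) := by
        gcongr
        · exact le_mul_of_one_le_left' (mod_cast le_max_left _ _)
        · exact le_max_right _ _
    _ = _ := by
        rw [ENNReal.ofReal]
        push_cast
        ring

end Sobolev

section Polar

variable {E : Type*} [NormedAddCommGroup E] [NormedSpace ℝ E] [FiniteDimensional ℝ E]
  [Nontrivial E] [MeasurableSpace E] [BorelSpace E] (μ : Measure E) [μ.IsAddHaarMeasure]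

theorem lintegral_eq_lintegral_toSphere_volumeIoiPow {g : E → ℝ≥0∞} (hg : Measurable g) :
    ∫⁻ x, g x ∂μ = ∫⁻ r : Ioi (0 : ℝ), ∫⁻ ω : sphere (0 : E) 1, g (r.1 • (ω : E)) ∂μ.toSphere
      ∂Measure.volumeIoiPow (finrank ℝ E - 1) := by
  have hpolar : Measurable fun p : sphere (0 : E) 1 × Ioi (0 : ℝ) => g (p.2.1 • (p.1 : E)) :=
    hg.comp (by fun_prop)
  rw [← lintegral_prod_symm _ hpolar.aemeasurable,
    ← μ.measurePreserving_homeomorphUnitSphereProd.lintegral_comp_emb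
      (Homeomorph.measurableEmbedding _)]
  calc ∫⁻ x, g x ∂μ = ∫⁻ x : ({0}ᶜ : Set E), g x ∂μ.comap (↑) := by
        rw [lintegral_subtype_comap (measurableSet_singleton _).compl, restrict_compl_singleton]
    _ = _ := lintegral_congr fun x => congrArg g (by simp [smul_smul, norm_ne_zero_iff.2 x.2])

lemma lintegral_ball_le_of_lintegral_sphere_le {g : E → ℝ≥0∞} (hg : Measurable g) {R : ℝ}
    (hR : 0 < R) {c : ℝ≥0∞}
    (hc : ∀ r : ℝ, 0 < r → r < R → ∫⁻ ω : sphere (0 : E) 1, g (r • (ω : E)) ∂μ.toSphere ≤ c) :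
    ∫⁻ x in ball 0 R, g x ∂μ ≤ ENNReal.ofReal (R ^ finrank ℝ E / finrank ℝ E) * c := by
  have hradial (r : Ioi (0 : ℝ)) :
      ∫⁻ ω : sphere (0 : E) 1, (ball 0 R).indicator g (r.1 • (ω : E)) ∂μ.toSphere ≤
        (Iio ⟨R, hR⟩).indicator (fun _ => c) r := by
    have hr : 0 < r.1 := r.2
    by_cases hrR : r.1 < R
    · rw [indicator_of_mem (show r ∈ Iio ⟨R, hR⟩ from hrR)]
      exact (lintegral_mono fun ω => indicator_le_self _ _ _).trans (hc r hr hrR)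
    · simp [norm_smul, abs_of_pos hr, hrR, indicator]
  have hdim : finrank ℝ E - 1 + 1 = finrank ℝ E := Nat.sub_add_cancel finrank_pos
  rw [← lintegral_indicator measurableSet_ball,
    lintegral_eq_lintegral_toSphere_volumeIoiPow μ (hg.indicator measurableSet_ball)]
  refine (lintegral_mono hradial).trans ?_
  rw [lintegral_indicator_const measurableSet_Iio, Measure.volumeIoiPow_apply_Iio, mul_comm,
    ← Nat.cast_add_one, hdim]

end Polar

section Diamagnetic

variable {E F : Type*} [NormedAddCommGroup E] [NormedSpace ℝ E] [NormedAddCommGroup F]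

/-- The regularised norm `√(‖z‖² + ε²)`: a substitute for `‖z‖` that is smooth at `0` when `ε ≠ 0`,
so that the Sobolev inequality applies to `regNorm ε ∘ w`. -/
def regNorm (ε : ℝ) (z : F) : ℝ := √(‖z‖ ^ 2 + ε ^ 2)

lemma norm_le_regNorm (ε : ℝ) (z : F) : ‖z‖ ≤ regNorm ε z :=
  Real.le_sqrt_of_sq_le (le_add_of_nonneg_right (sq_nonneg ε))

lemma regNorm_pos {ε : ℝ} (hε : ε ≠ 0) (z : F) : 0 < regNorm ε z :=
  Real.sqrt_pos.2 (by positivity)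

lemma regNorm_le {ε : ℝ} (hε : 0 ≤ ε) (z : F) : regNorm ε z ≤ ‖z‖ + ε :=
  Real.sqrt_le_iff.2 ⟨by positivity, by nlinarith [mul_nonneg (norm_nonneg z) hε]⟩

lemma eLpNorm_regNorm_comp_le {α : Type*} [MeasurableSpace α] {μ : Measure α} {p : ℝ≥0∞}
    (hp : 1 ≤ p) {ε : ℝ} (hε : 0 ≤ ε) {w : α → F} (hw : AEStronglyMeasurable w μ) :
    eLpNorm (fun x => regNorm ε (w x)) p μ ≤
      eLpNorm w p μ + ENNReal.ofReal ε * eLpNorm (fun _ => (1 : ℝ)) p μ := by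
  calc _ ≤ eLpNorm ((fun x => ‖w x‖) + ε • fun _ => (1 : ℝ)) p μ :=
        eLpNorm_mono_real fun x => by
          simpa [abs_of_nonneg (Real.sqrt_nonneg _), regNorm] using regNorm_le hε (w x)
    _ ≤ _ := by
        refine (eLpNorm_add_le hw.norm (aestronglyMeasurable_const.const_smul ε) hp).trans_eq ?_
        rw [eLpNorm_const_smul, eLpNorm_norm, Real.enorm_of_nonneg hε]

section RealInner

variable [InnerProductSpace ℝ F]

lemma contDiff_regNorm_comp {n : WithTop ℕ∞} {ε : ℝ} (hε : ε ≠ 0) {w : E → F}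
    (hw : ContDiff ℝ n w) :
    ContDiff ℝ n fun x => regNorm ε (w x) :=
  ((hw.norm_sq ℝ).add contDiff_const).sqrt fun _ => by positivity

lemma fderiv_regNorm_comp_apply {ε : ℝ} (hε : ε ≠ 0) {w : E → F} {x : E}
    (hw : DifferentiableAt ℝ w x) (h : E) :
    fderiv ℝ (fun y => regNorm ε (w y)) x h = inner ℝ (w x) (fderiv ℝ w x h) / regNorm ε (w x) := by
  have hpos : ‖w x‖ ^ 2 + ε ^ 2 ≠ 0 := by positivity
  have hderiv : HasFDerivAt (fun y => regNorm ε (w y)) _ x :=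
    ((hw.hasFDerivAt.norm_sq).add_const (ε ^ 2)).sqrt hpos
  rw [hderiv.fderiv]
  have hval : (1 / (2 * √(‖w x‖ ^ 2 + ε ^ 2))) * (2 * inner ℝ (w x) (fderiv ℝ w x h)) =
      inner ℝ (w x) (fderiv ℝ w x h) / regNorm ε (w x) := by
    rw [regNorm]
    field_simp
  simpa using hval

lemma abs_fderiv_regNorm_comp_apply_le {ε : ℝ} (hε : ε ≠ 0) {w : E → F} {x : E}
    (hw : DifferentiableAt ℝ w x) (h : E) {z : F} (hz : inner ℝ (w x) z = 0) :
    |fderiv ℝ (fun y => regNorm ε (w y)) x h| ≤ ‖fderiv ℝ w x h + z‖ := by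
  have hinner : inner ℝ (w x) (fderiv ℝ w x h) = inner ℝ (w x) (fderiv ℝ w x h + z) := by
    rw [inner_add_right, hz, add_zero]
  rw [fderiv_regNorm_comp_apply hε hw, hinner, abs_div, abs_of_pos (regNorm_pos hε _),
    div_le_iff₀ (regNorm_pos hε _), mul_comm]
  exact (abs_real_inner_le_norm _ _).trans
    (mul_le_mul_of_nonneg_right (norm_le_regNorm ε _) (norm_nonneg _))

end RealInner

variable [InnerProductSpace ℂ F]

lemma abs_fderiv_regNorm_comp_apply_le_norm_magnetic {ε : ℝ} (hε : ε ≠ 0) {w : E → F}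
    {x : E} (hw : DifferentiableAt ℝ w x) (h : E) (a : ℝ) :
    |fderiv ℝ (fun y => regNorm ε (w y)) x h| ≤ ‖fderiv ℝ w x h + (I * a) • w x‖ := by
  let : InnerProductSpace ℝ F := .complexToReal
  refine abs_fderiv_regNorm_comp_apply_le hε hw h ?_
  rw [mul_comm, mul_smul, Complex.coe_smul, inner_smul_right]
  exact mul_eq_zero_of_right _ (real_inner_I_smul_self ℂ (w x))

end Diamagnetic

lemma opNorm_le_sqrt_sum_norm_sq {ι E G : Type*} [Fintype ι]
    [NormedAddCommGroup E] [InnerProductSpace ℝ E] [NormedAddCommGroup G] [NormedSpace ℝ G]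
    (b : OrthonormalBasis ι ℝ E) (T : E →L[ℝ] G) :
    ‖T‖ ≤ √(∑ i, ‖T (b i)‖ ^ 2) := by
  refine T.opNorm_le_bound (Real.sqrt_nonneg _) fun x => ?_
  calc ‖T x‖ = ‖∑ i, inner ℝ (b i) x • T (b i)‖ := by
        conv_lhs => rw [← b.sum_repr' x, map_sum]
        simp
    _ ≤ ∑ i, ‖T (b i)‖ * ‖inner ℝ (b i) x‖ :=
        norm_sum_le_of_le _ fun i _ => by rw [norm_smul, mul_comm]
    _ ≤ √(∑ i, ‖T (b i)‖ ^ 2) * √(∑ i, ‖inner ℝ (b i) x‖ ^ 2) :=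
        Real.sum_mul_le_sqrt_mul_sqrt _ _ _
    _ = _ := by rw [b.sum_sq_norm_inner_right, Real.sqrt_sq (norm_nonneg x)]

lemma le_of_forall_pos_le_add_ofReal_mul {a b c : ℝ≥0∞} (hc : c ≠ ⊤)
    (h : ∀ ε : ℝ, 0 < ε → a ≤ b + ENNReal.ofReal ε * c) : a ≤ b := by
  have hlim : Tendsto (fun ε : ℝ => b + ENNReal.ofReal ε * c) (𝓝[>] 0) (𝓝 b) := by
    have h0 := ENNReal.tendsto_ofReal (tendsto_id (x := 𝓝 (0 : ℝ)))
    simpa using ((ENNReal.Tendsto.mul_const h0 (.inr hc)).const_add b).mono_left nhdsWithin_le_nhds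
  exact ge_of_tendsto hlim (eventually_mem_nhdsWithin.mono h)

lemma eLpNorm_two_sq {α G : Type*} [MeasurableSpace α] [ENorm G] (f : α → G) (μ : Measure α) :
    eLpNorm f 2 μ ^ 2 = ∫⁻ x, ‖f x‖ₑ ^ 2 ∂μ := by
  simpa using eLpNorm_nnreal_pow_eq_lintegral (f := f) (μ := μ) (p := 2) two_ne_zero

lemma ofReal_sqrt_sq {R : ℝ} (hR : 0 ≤ R) : ENNReal.ofReal √R ^ 2 = ENNReal.ofReal R := by
  rw [← ENNReal.ofReal_pow (Real.sqrt_nonneg R), Real.sq_sqrt hR]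

lemma rpow_one_half_sq (x : ℝ≥0∞) : (x ^ (1 / 2 : ℝ)) ^ 2 = x := by
  rw [← ENNReal.rpow_mul_natCast]; norm_num

lemma lintegral_sphere_le_Xnorm2 (g : E3 → ℝ≥0∞) {r : ℝ} (hr : 0 < r) :
    ∫⁻ ω : sphere (0 : E3) 1, g (r • (ω : E3)) ∂(volume : Measure E3).toSphere ≤ Xnorm2 g := by
  have hr2 : ENNReal.ofReal (r ^ 2) ≠ 0 := by simpa using hr.ne'
  refine le_of_eq_of_le ?_ (le_iSup₂ (f := fun (R : ℝ) (_ : 0 < R) =>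
    (ENNReal.ofReal (R ^ 2))⁻¹ * sphInt g R) r hr)
  rw [sphInt, ← mul_assoc, ENNReal.inv_mul_cancel hr2 ENNReal.ofReal_ne_top, one_mul]

lemma lintegral_closedBall_le_Xnorm2 {g : E3 → ℝ≥0∞} (hg : Measurable g) {R : ℝ} (hR : 0 < R) :
    ∫⁻ x in closedBall 0 R, g x ≤ ENNReal.ofReal (R ^ 3 / 3) * Xnorm2 g := by
  have hball := lintegral_ball_le_of_lintegral_sphere_le volume hg hR
    fun r hr _ => lintegral_sphere_le_Xnorm2 g hr
  have hae : (closedBall 0 R : Set E3) =ᵐ[volume] ball 0 R := by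
    rw [← ball_union_sphere]
    exact union_ae_eq_left_of_ae_eq_empty (ae_eq_empty.2 (Measure.addHaar_sphere volume 0 R))
  simpa [setLIntegral_congr hae] using hball

lemma Ynorm2_le_iff {g : E3 → ℝ≥0∞} {c : ℝ≥0∞} :
    Ynorm2 g ≤ c ↔ ∀ R : ℝ, 0 < R → ∫⁻ x in closedBall 0 R, g x ≤ ENNReal.ofReal R * c := by
  have hball (R : ℝ) : {x : E3 | ‖x‖ ≤ R} = closedBall 0 R := by ext; simp
  rw [Ynorm2, iSup₂_le_iff]
  refine forall₂_congr fun R hR => ?_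
  rw [hball, ENNReal.inv_mul_le_iff (by simpa using hR) ENNReal.ofReal_ne_top]

lemma closedBall_subset_singleton_union_iUnion_ann {R : ℝ} {J : ℤ} (hJ : R < 2 ^ (J + 1)) :
    closedBall (0 : E3) R ⊆ {0} ∪ ⋃ k : ℕ, ann (J - k) := by
  intro x hx
  rw [mem_closedBall_zero_iff] at hx
  rcases eq_or_ne x 0 with rfl | hx0
  · exact Or.inl rfl
  obtain ⟨i, hi⟩ := exists_mem_Ico_zpow (norm_pos_iff.2 hx0) (one_lt_two (α := ℝ))
  have hiJ : i < J + 1 := (zpow_lt_zpow_iff_right₀ one_lt_two).1 ((hi.1.trans hx).trans_lt hJ)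
  refine Or.inr (mem_iUnion.2 ⟨(J - i).toNat, ?_⟩)
  rwa [show J - ((J - i).toNat : ℤ) = i by omega]

lemma Ynorm2_le_of_lintegral_ann_le {g : E3 → ℝ≥0∞} {c : ℝ≥0∞}
    (h : ∀ j, ∫⁻ x in ann j, g x ≤ ENNReal.ofReal (2 ^ j) * c) : Ynorm2 g ≤ 2 * c := by
  refine Ynorm2_le_iff.2 fun R hR => ?_
  obtain ⟨J, hJR, hRJ⟩ := exists_mem_Ico_zpow hR (one_lt_two (α := ℝ))
  have hscale (k : ℕ) : ENNReal.ofReal (2 ^ (J - k)) = 2⁻¹ ^ k * ENNReal.ofReal (2 ^ J) := by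
    rw [zpow_sub₀ two_ne_zero, zpow_natCast, div_eq_inv_mul,
      ENNReal.ofReal_mul (by positivity), ENNReal.ofReal_inv_of_pos (by positivity),
      ENNReal.ofReal_pow zero_le_two, ENNReal.ofReal_ofNat, ENNReal.inv_pow]
  calc ∫⁻ x in closedBall 0 R, g x
      ≤ ∫⁻ x in {0} ∪ ⋃ k : ℕ, ann (J - k), g x :=
        lintegral_mono_set (closedBall_subset_singleton_union_iUnion_ann hRJ)
    _ ≤ ∫⁻ x in ⋃ k : ℕ, ann (J - k), g x := by
        simpa using lintegral_union_le (μ := volume) g {0} (⋃ k : ℕ, ann (J - k))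
    _ ≤ ∑' k : ℕ, ∫⁻ x in ann (J - k), g x := lintegral_iUnion_le _ _
    _ ≤ ∑' k : ℕ, 2⁻¹ ^ k * (ENNReal.ofReal (2 ^ J) * c) :=
        ENNReal.tsum_le_tsum fun k => (h _).trans_eq (by rw [hscale, mul_assoc])
    _ = 2 * (ENNReal.ofReal (2 ^ J) * c) := by
        rw [ENNReal.tsum_mul_right, ENNReal.tsum_geometric, ENNReal.one_sub_inv_two, inv_inv]
    _ ≤ ENNReal.ofReal R * (2 * c) := by
        rw [mul_left_comm]
        gcongr

section VectorNorms

variable {G : Type*} [NormedAddCommGroup G]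

/-- The norm `‖f‖_Ẋ` of a vector-valued function, its size at each point being the norm of `G`. -/
def Xnorm (f : E3 → G) : ℝ≥0∞ := Xnorm2 (fun x => ‖f x‖ₑ ^ 2) ^ (1 / 2 : ℝ)

/-- The norm `‖f‖_Ẏ` of a vector-valued function, its size at each point being the norm of `G`. -/
def Ynorm (f : E3 → G) : ℝ≥0∞ := Ynorm2 (fun x => ‖f x‖ₑ ^ 2) ^ (1 / 2 : ℝ)

lemma eLpNorm_closedBall_le_Xnorm {f : E3 → G} (hf : StronglyMeasurable f) {R : ℝ} (hR : 0 < R) :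
    eLpNorm f 2 (volume.restrict (closedBall 0 R)) ≤ ENNReal.ofReal √(R ^ 3 / 3) * Xnorm f := by
  rw [← ENNReal.pow_le_pow_left_iff two_ne_zero, eLpNorm_two_sq, mul_pow,
    ofReal_sqrt_sq (by positivity), Xnorm, rpow_one_half_sq]
  exact lintegral_closedBall_le_Xnorm2 (hf.enorm.pow_const 2) hR

lemma Ynorm_le_iff {f : E3 → G} {c : ℝ≥0∞} :
    Ynorm f ≤ c ↔ ∀ R : ℝ, 0 < R →
      eLpNorm f 2 (volume.restrict (closedBall 0 R)) ≤ ENNReal.ofReal √R * c := by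
  rw [← ENNReal.pow_le_pow_left_iff two_ne_zero, Ynorm, rpow_one_half_sq, Ynorm2_le_iff]
  refine forall₂_congr fun R hR => ?_
  rw [← eLpNorm_two_sq, ← ofReal_sqrt_sq hR.le, ← mul_pow,
    ENNReal.pow_le_pow_left_iff two_ne_zero]

lemma eLpNorm_closedBall_le_Ynorm (f : E3 → G) {R : ℝ} (hR : 0 < R) :
    eLpNorm f 2 (volume.restrict (closedBall 0 R)) ≤ ENNReal.ofReal √R * Ynorm f :=
  Ynorm_le_iff.1 le_rfl R hR

lemma Ynorm_sub_le {f g : E3 → G} (hf : AEStronglyMeasurable f) (hg : AEStronglyMeasurable g) :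
    Ynorm (f - g) ≤ Ynorm f + Ynorm g := by
  refine Ynorm_le_iff.2 fun R hR => ?_
  rw [mul_add]
  exact (eLpNorm_sub_le hf.restrict hg.restrict one_le_two).trans
    (add_le_add (eLpNorm_closedBall_le_Ynorm f hR) (eLpNorm_closedBall_le_Ynorm g hR))

lemma Ynorm_le_of_eLpNorm_ann_le {f : E3 → G} {c : ℝ≥0∞}
    (h : ∀ j : ℤ, eLpNorm f 2 (volume.restrict (ann j)) ≤ ENNReal.ofReal √(2 ^ (j + 1)) * c) :
    Ynorm f ≤ 2 * c := by
  rw [← ENNReal.pow_le_pow_left_iff two_ne_zero, Ynorm, rpow_one_half_sq]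
  calc _ ≤ 2 * (2 * c ^ 2) := Ynorm2_le_of_lintegral_ann_le fun j => by
        rw [← eLpNorm_two_sq]
        refine (pow_le_pow_left' (h j) 2).trans_eq ?_
        rw [mul_pow, ofReal_sqrt_sq (by positivity), zpow_add_one₀ two_ne_zero,
          ENNReal.ofReal_mul (by positivity), ENNReal.ofReal_ofNat, mul_assoc]
    _ = _ := by ring

end VectorNorms

section Magnetic

variable {F : Type*} [NormedAddCommGroup F] [InnerProductSpace ℂ F]

/-- The vector `(∂₁w, ∂₂w, ∂₃w)` of partial derivatives, with the Euclidean norm. -/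
def grad (w : E3 → F) (x : E3) : PiLp 2 fun _ : Fin 3 => F :=
  WithLp.toLp 2 fun j => fderiv ℝ w x (e3 j)

/-- The zeroth-order term `iAw` of the magnetic gradient. -/
def potentialTerm (A : E3 → Fin 3 → ℝ) (w : E3 → F) (x : E3) : PiLp 2 fun _ : Fin 3 => F :=
  WithLp.toLp 2 fun j => (I * (A x j : ℝ)) • w x

/-- The magnetic gradient `∂^A w`. -/
def magneticGrad (A : E3 → Fin 3 → ℝ) (w : E3 → F) : E3 → PiLp 2 fun _ : Fin 3 => F :=
  grad w + potentialTerm A w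

lemma continuous_grad {w : E3 → F} (hw : ContDiff ℝ 1 w) : Continuous (grad w) :=
  (PiLp.continuous_toLp 2 _).comp
    (continuous_pi fun _ => (hw.continuous_fderiv one_ne_zero).clm_apply continuous_const)

lemma aestronglyMeasurable_potentialTerm {A : E3 → Fin 3 → ℝ}
    (hA : ∀ j, AEMeasurable fun x => A x j) {w : E3 → F} (hw : Continuous w) :
    AEStronglyMeasurable (potentialTerm A w) := by
  have hA' : AEStronglyMeasurable A := (aemeasurable_pi_iff.2 hA).aestronglyMeasurable
  have hcont : Continuous fun p : (Fin 3 → ℝ) × F =>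
      (WithLp.toLp 2 fun j => (I * (p.1 j : ℝ)) • p.2 : PiLp 2 fun _ : Fin 3 => F) :=
    (PiLp.continuous_toLp 2 _).comp (continuous_pi fun j => by fun_prop)
  exact hcont.comp_aestronglyMeasurable (hA'.prodMk hw.aestronglyMeasurable)

lemma norm_potentialTerm (A : E3 → Fin 3 → ℝ) (w : E3 → F) (x : E3) :
    ‖potentialTerm A w x‖ = √(∑ j, A x j ^ 2) * ‖w x‖ := by
  simp [potentialTerm, PiLp.norm_eq_of_L2, norm_smul, mul_pow, ← Finset.sum_mul]

lemma eLpNorm_potentialTerm_ann_le {A : E3 → Fin 3 → ℝ} (hA : ∀ j, AEMeasurable fun x => A x j)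
    {w : E3 → F} (hw : Continuous w) (j : ℤ) :
    eLpNorm (potentialTerm A w) 2 (volume.restrict (ann j)) ≤
      linfL3 A * eLpNorm w 6 (volume.restrict (ann j)) := by
  have : ENNReal.HolderTriple 3 6 2 := ⟨by
    rw [← ENNReal.toReal_eq_toReal_iff' (by simp) (by simp), ENNReal.toReal_add (by simp) (by simp)]
    norm_num⟩
  have hAm : AEMeasurable fun x => √(∑ i, A x i ^ 2) :=
    (Finset.aemeasurable_fun_sum _ fun i _ => (hA i).pow_const 2).sqrt
  calc eLpNorm (potentialTerm A w) 2 (volume.restrict (ann j))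
      = eLpNorm ((fun x => √(∑ i, A x i ^ 2)) • w) 2 (volume.restrict (ann j)) :=
        eLpNorm_congr_norm_ae (.of_forall fun x => by
          simp [norm_potentialTerm, norm_smul, abs_of_nonneg (Real.sqrt_nonneg _)])
    _ ≤ eLpNorm (fun x => √(∑ i, A x i ^ 2)) 3 (volume.restrict (ann j)) *
          eLpNorm w 6 (volume.restrict (ann j)) :=
        eLpNorm_smul_le_mul_eLpNorm hw.aestronglyMeasurable hAm.restrict.aestronglyMeasurable
    _ ≤ linfL3 A * eLpNorm w 6 (volume.restrict (ann j)) := by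
        gcongr
        exact le_iSup (fun j => eLpNorm (fun x => √(∑ i, A x i ^ 2)) 3 (volume.restrict (ann j))) j

lemma norm_fderiv_regNorm_comp_le_norm_magneticGrad {ε : ℝ} (hε : ε ≠ 0) (A : E3 → Fin 3 → ℝ)
    {w : E3 → F} {x : E3} (hw : DifferentiableAt ℝ w x) :
    ‖fderiv ℝ (fun y => regNorm ε (w y)) x‖ ≤ ‖magneticGrad A w x‖ := by
  refine (opNorm_le_sqrt_sum_norm_sq (EuclideanSpace.basisFun (Fin 3) ℝ) _).trans ?_
  rw [PiLp.norm_eq_of_L2]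
  gcongr with j
  rw [EuclideanSpace.basisFun_apply]
  exact abs_fderiv_regNorm_comp_apply_le_norm_magnetic hε hw (e3 j) (A x j)

theorem exists_eLpNorm_closedBall_le_eLpNorm_magneticGrad (F : Type*) [NormedAddCommGroup F]
    [InnerProductSpace ℂ F] :
    ∃ K : ℝ≥0, ∀ (A : E3 → Fin 3 → ℝ) (w : E3 → F), ContDiff ℝ 1 w → ∀ R : ℝ, 0 < R →
      eLpNorm w 6 (volume.restrict (closedBall 0 R)) ≤
        K * (eLpNorm (magneticGrad A w) 2 (volume.restrict (closedBall 0 (2 * R))) +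
          ENNReal.ofReal R⁻¹ * eLpNorm w 2 (volume.restrict (closedBall 0 (2 * R)))) := by
  obtain ⟨K, hK⟩ := exists_eLpNorm_closedBall_le_eLpNorm_fderiv (volume : Measure E3) ℝ
    (p := 2) (p' := 6) one_le_two finrank_pos (by norm_num)
  refine ⟨K, fun A w hw R hR => ?_⟩
  set B := volume.restrict (closedBall (0 : E3) (2 * R))
  have : IsFiniteMeasure B := isFiniteMeasure_restrict.2 measure_closedBall_lt_top.ne
  have hB_top : eLpNorm (fun _ => (1 : ℝ)) 2 B ≠ ⊤ := (memLp_const 1).eLpNorm_ne_top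
  refine le_of_forall_pos_le_add_ofReal_mul
    (c := K * (ENNReal.ofReal R⁻¹ * eLpNorm (fun _ => (1 : ℝ)) 2 B)) (by finiteness) fun ε hε => ?_
  have hreg : ContDiff ℝ 1 fun x => regNorm ε (w x) :=
    let : InnerProductSpace ℝ F := .complexToReal
    contDiff_regNorm_comp hε.ne' hw
  calc eLpNorm w 6 (volume.restrict (closedBall 0 R))
      ≤ eLpNorm (fun x => regNorm ε (w x)) 6 (volume.restrict (closedBall 0 R)) :=
        eLpNorm_mono_real fun x => norm_le_regNorm ε (w x)
    _ ≤ K * (eLpNorm (fderiv ℝ fun x => regNorm ε (w x)) 2 B +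
          ENNReal.ofReal R⁻¹ * eLpNorm (fun x => regNorm ε (w x)) 2 B) := hK _ hreg 0 R hR
    _ ≤ K * (eLpNorm (magneticGrad A w) 2 B + ENNReal.ofReal R⁻¹ *
          (eLpNorm w 2 B + ENNReal.ofReal ε * eLpNorm (fun _ => (1 : ℝ)) 2 B)) := by
        gcongr
        · exact eLpNorm_mono fun x => norm_fderiv_regNorm_comp_le_norm_magneticGrad hε.ne' A
            (hw.differentiable one_ne_zero x)
        · exact eLpNorm_regNorm_comp_le one_le_two hε.le hw.continuous.aestronglyMeasurable
    _ = _ := by ring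

theorem exists_eLpNorm_six_closedBall_le (F : Type*) [NormedAddCommGroup F]
    [InnerProductSpace ℂ F] :
    ∃ K : ℝ≥0, ∀ (A : E3 → Fin 3 → ℝ) (w : E3 → F), ContDiff ℝ 1 w → ∀ R : ℝ, 0 < R →
      eLpNorm w 6 (volume.restrict (closedBall 0 R)) ≤
        ENNReal.ofReal √R * (K * (Ynorm (magneticGrad A w) + Xnorm w)) := by
  obtain ⟨K, hK⟩ := exists_eLpNorm_closedBall_le_eLpNorm_magneticGrad F
  refine ⟨K * 2, fun A w hw R hR => (hK A w hw R hR).trans ?_⟩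
  have hY : √(2 * R) ≤ 2 * √R :=
    Real.sqrt_le_iff.2 ⟨by positivity, by rw [mul_pow, Real.sq_sqrt hR.le]; linarith⟩
  have hX : R⁻¹ * √((2 * R) ^ 3 / 3) ≤ 2 * √R := by
    rw [inv_mul_le_iff₀ hR]
    refine Real.sqrt_le_iff.2 ⟨by positivity, ?_⟩
    rw [mul_pow R, mul_pow 2 √R, Real.sq_sqrt hR.le]
    nlinarith [pow_pos hR 3]
  calc _ ≤ K * (ENNReal.ofReal √(2 * R) * Ynorm (magneticGrad A w) +
          ENNReal.ofReal R⁻¹ * (ENNReal.ofReal √((2 * R) ^ 3 / 3) * Xnorm w)) := by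
        gcongr
        · exact eLpNorm_closedBall_le_Ynorm _ (by positivity)
        · exact eLpNorm_closedBall_le_Xnorm hw.continuous.stronglyMeasurable (by positivity)
    _ ≤ K * (ENNReal.ofReal (2 * √R) * Ynorm (magneticGrad A w) +
          ENNReal.ofReal (2 * √R) * Xnorm w) := by
        rw [← mul_assoc (ENNReal.ofReal R⁻¹), ← ENNReal.ofReal_mul (inv_nonneg.2 hR.le)]
        gcongr
    _ = _ := by
        rw [ENNReal.ofReal_mul zero_le_two, ENNReal.ofReal_ofNat]
        push_cast
        ring

theorem exists_Ynorm_potentialTerm_le (F : Type*) [NormedAddCommGroup F]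
    [InnerProductSpace ℂ F] :
    ∃ K : ℝ≥0, ∀ A : E3 → Fin 3 → ℝ, (∀ j, AEMeasurable fun x => A x j) →
      ∀ w : E3 → F, ContDiff ℝ 1 w →
        Ynorm (potentialTerm A w) ≤ K * linfL3 A * (Ynorm (magneticGrad A w) + Xnorm w) := by
  obtain ⟨K, hK⟩ := exists_eLpNorm_six_closedBall_le F
  refine ⟨2 * K, fun A hA w hw => ?_⟩
  set S := Ynorm (magneticGrad A w) + Xnorm w
  have hann (j : ℤ) : ann j ⊆ closedBall 0 (2 ^ (j + 1)) := fun x hx =>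
    mem_closedBall_zero_iff.2 hx.2.le
  calc Ynorm (potentialTerm A w) ≤ 2 * (linfL3 A * (K * S)) :=
        Ynorm_le_of_eLpNorm_ann_le fun j => by
          refine (eLpNorm_potentialTerm_ann_le hA hw.continuous j).trans ?_
          rw [mul_left_comm]
          gcongr
          exact (eLpNorm_mono_measure w (Measure.restrict_mono_set _ (hann j))).trans
            (hK A w hw _ (by positivity))
    _ = _ := by push_cast; ring

theorem magnetic_gradient_equivalence_general (F : Type*) [NormedAddCommGroup F]
    [InnerProductSpace ℂ F] :
    ∃ C : ℝ, 0 < C ∧ ∀ A : E3 → Fin 3 → ℝ, (∀ j, AEMeasurable fun x => A x j) →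
      ∀ w : E3 → F, ContDiff ℝ 1 w →
        Ynorm (grad w) ≤
          ENNReal.ofReal C * (1 + linfL3 A) * (Ynorm (magneticGrad A w) + Xnorm w) := by
  obtain ⟨K, hK⟩ := exists_Ynorm_potentialTerm_le F
  refine ⟨1 + K, by positivity, fun A hA w hw => ?_⟩
  set S := Ynorm (magneticGrad A w) + Xnorm w
  have hgrad : AEStronglyMeasurable (grad w) := (continuous_grad hw).aestronglyMeasurable
  have hpot := aestronglyMeasurable_potentialTerm hA hw.continuous
  calc Ynorm (grad w) = Ynorm (magneticGrad A w - potentialTerm A w) := by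
        rw [magneticGrad, add_sub_cancel_right]
    _ ≤ Ynorm (magneticGrad A w) + Ynorm (potentialTerm A w) :=
        Ynorm_sub_le (hgrad.add hpot) hpot
    _ ≤ S + K * linfL3 A * S := add_le_add le_self_add (hK A hA w hw)
    _ = (1 + K * linfL3 A) * S := by ring
    _ ≤ _ := by
        rw [ENNReal.ofReal_add zero_le_one K.coe_nonneg, ENNReal.ofReal_one,
          ENNReal.ofReal_coe_nnreal, add_mul 1 (K : ℝ≥0∞), one_mul]
        gcongr
        · exact le_self_add
        · exact le_add_self

end Magnetic

section Spinor

/-- The spinor field `v` with values in `ℂ⁴` equipped with its Hermitian norm; `C4` itself carries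
the supremum norm. -/
def euclideanField (v : E3 → C4) (x : E3) : EuclideanSpace ℂ (Fin 4) := WithLp.toLp 2 (v x)

lemma contDiff_euclideanField {n : WithTop ℕ∞} {v : E3 → C4} (hv : ContDiff ℝ n v) :
    ContDiff ℝ n (euclideanField v) :=
  ((EuclideanSpace.equiv (Fin 4) ℂ).symm.toContinuousLinearMap.restrictScalars ℝ).contDiff.comp hv

lemma toLp_partialD {v : E3 → C4} (hv : ContDiff ℝ 1 v) (j : Fin 3) (x : E3) :
    WithLp.toLp 2 (partialD j v x) = fderiv ℝ (euclideanField v) x (e3 j) := by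
  ext k
  let coord : EuclideanSpace ℂ (Fin 4) →L[ℝ] ℂ := (EuclideanSpace.proj k).restrictScalars ℝ
  have hv' := (contDiff_euclideanField hv).differentiable one_ne_zero x
  exact congrArg (· (e3 j)) (coord.hasFDerivAt.comp x hv'.hasFDerivAt).fderiv

lemma ofReal_normSq4 (z : C4) :
    ENNReal.ofReal (normSq4 z) = ‖(WithLp.toLp 2 z : EuclideanSpace ℂ (Fin 4))‖ₑ ^ 2 := by
  rw [← ofReal_norm, ← ENNReal.ofReal_pow (norm_nonneg _), EuclideanSpace.norm_sq_eq]
  simp only [normSq4, Complex.normSq_eq_norm_sq]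

lemma ofReal_sum_normSq4 (z : Fin 3 → C4) :
    ENNReal.ofReal (∑ j, normSq4 (z j)) =
      ‖(WithLp.toLp 2 fun j => WithLp.toLp 2 (z j) :
        PiLp 2 fun _ : Fin 3 => EuclideanSpace ℂ (Fin 4))‖ₑ ^ 2 := by
  rw [← ofReal_norm, ← ENNReal.ofReal_pow (norm_nonneg _), PiLp.norm_sq_eq_of_L2]
  simp only [normSq4, EuclideanSpace.norm_sq_eq, Complex.normSq_eq_norm_sq]

lemma ofReal_sum_normSq4_partialD {v : E3 → C4} (hv : ContDiff ℝ 1 v) (x : E3) :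
    ENNReal.ofReal (∑ j, normSq4 (partialD j v x)) = ‖grad (euclideanField v) x‖ₑ ^ 2 := by
  simp only [ofReal_sum_normSq4, toLp_partialD hv, grad]

lemma ofReal_sum_normSq4_dMag (A : E3 → Fin 3 → ℝ) {v : E3 → C4} (hv : ContDiff ℝ 1 v) (x : E3) :
    ENNReal.ofReal (∑ j, normSq4 (dMag A j v x)) =
      ‖magneticGrad A (euclideanField v) x‖ₑ ^ 2 := by
  simp only [ofReal_sum_normSq4, dMag, WithLp.toLp_add, toLp_partialD hv]
  rfl

end Spinor

/-- equivalence of magnetic and free gradients in dyadic-weighted norms. -/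
theorem magnetic_gradient_equivalence :
    ∃ C : ℝ, 0 < C ∧
      ∀ A : E3 → Fin 3 → ℝ, (∀ j, Measurable fun x => A x j) →
        linfL3 A < ⊤ →
        ∀ v : SchwartzMap E3 C4,
          (Ynorm2 (fun x =>
              ENNReal.ofReal (∑ j : Fin 3, normSq4 (partialD j (⇑v) x)))) ^ (1/2 : ℝ) ≤
            ENNReal.ofReal C * (1 + linfL3 A) *
              ((Ynorm2 (fun x =>
                  ENNReal.ofReal (∑ j : Fin 3, normSq4 (dMag A j (⇑v) x)))) ^ (1/2 : ℝ)
                + (Xnorm2 (fun x => ENNReal.ofReal (normSq4 (v x)))) ^ (1/2 : ℝ)) := by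
  obtain ⟨C, hC, hbound⟩ := magnetic_gradient_equivalence_general (EuclideanSpace ℂ (Fin 4))
  refine ⟨C, hC, fun A hA _ v => ?_⟩
  simp only [ofReal_sum_normSq4_partialD (v.smooth 1), ofReal_sum_normSq4_dMag A (v.smooth 1),
    ofReal_normSq4]
  exact hbound A (fun j => (hA j).aemeasurable) _ (contDiff_euclideanField (v.smooth 1))
end
end

section
/- Morawetz-type divergence identity (first multiplier): let A ∈ C¹(ℝ³;ℝ³), w ∈ C^∞(ℝ³;ℂ), ψ ∈ C^∞(ℝ³;ℝ), c ∈ C¹(ℝ³;ℂ). Define [Δ_A,ψ]w := (Δψ) w + 2 Σ_j (∂_jψ)(∂_j^A w) and Q_j := (∂_j^A w) conj([Δ_A,ψ]w) − (1/2)(∂_j Δψ)|w|² − (∂_jψ)( c|w|² + |∂^A w|² ). Then at every point of ℝ³: Re Σ_j ∂_j Q_j = Re[ (Δ_A w − c w) conj([Δ_A,ψ]w) ] − (1/2)(Δ²ψ)|w|² + 2 Σ_{j,k} (∂_j^A w)(∂_j∂_kψ) conj(∂_k^A w) − Re( Σ_j (∂_jψ)(∂_j conj(c)) ) |w|² + 2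 Im( conj(w) Σ_{j,k} B_{jk} (∂_j^A w)(∂_kψ) ) − 2 (Im c) Im( Σ_j w (∂_jψ) conj(∂_j^A w) ). -/
/-!
The algebraic structure behind the identity is that `∂ⱼᴬ` is a metric connection of curvature `iB`:
`∂ⱼ(f ḡ) = (∂ⱼᴬ f) ḡ + f conj(∂ⱼᴬ g)` and `[∂ⱼᴬ, ∂ₖᴬ] = i Bⱼₖ`. Write `G = [Δ_A, ψ]w`. The Leibniz
rule gives `Σⱼ ∂ⱼ(∂ⱼᴬw Ḡ) = Δ_A w Ḡ + Σⱼ ∂ⱼᴬw conj(∂ⱼᴬG)`. In `∂ⱼᴬG` the curvature lets `∂ₖᴬ` act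
on `∂ⱼᴬw`, so the term `∂ₖψ ∂ⱼᴬ∂ₖᴬw` contributes `∇ψ·∇|∂ᴬw|²` and the magnetic term. The two
remaining pieces of `Q` are gradients times scalars, whose divergences cancel everything except the
terms on the right-hand side. Only directional derivatives along finitely many fixed vectors enter.
-/

open MeasureTheory Metric Complex
open scoped ENNReal

noncomputable section

/-- partial derivative of a real-valued function -/
def dR (f : E3 → ℝ) (j : Fin 3) (x : E3) : ℝ := fderiv ℝ f x (e3 j)

/-- partial derivative of a complex-valued function -/
def dC (f : E3 → ℂ) (j : Fin 3) (x : E3) : ℂ := fderiv ℝ f x (e3 j)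

/-- Laplacian of a real-valued function -/
def lapR (f : E3 → ℝ) (x : E3) : ℝ := ∑ j : Fin 3, fderiv ℝ (fun y => dR f j y) x (e3 j)

/-- Hessian entries of a real-valued function -/
def hess (f : E3 → ℝ) (j k : Fin 3) (x : E3) : ℝ := fderiv ℝ (fun y => dR f k y) x (e3 j)

/-- the magnetic derivative ∂ⱼᴬ = ∂ⱼ + iAⱼ on scalar functions -/
def dMagS (A : E3 → Fin 3 → ℝ) (j : Fin 3) (w : E3 → ℂ) : E3 → ℂ :=
  fun x => dC w j x + Complex.I * (A x j : ℝ) * w x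

/-- the magnetic Laplacian Δ_A = Σⱼ (∂ⱼ + iAⱼ)² on scalar functions -/
def lapMagS (A : E3 → Fin 3 → ℝ) (w : E3 → ℂ) (x : E3) : ℂ :=
  ∑ j : Fin 3, dMagS A j (dMagS A j w) x

/-- entries of the magnetic field B of A -/
def Bfield (A : E3 → Fin 3 → ℝ) (j k : Fin 3) (x : E3) : ℝ :=
  fderiv ℝ (fun y => A y k) x (e3 j) - fderiv ℝ (fun y => A y j) x (e3 k)

/-- the commutator [Δ_A, ψ]w = (Δψ)w + 2Σⱼ(∂ⱼψ)(∂ⱼᴬw) -/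
def commMag (A : E3 → Fin 3 → ℝ) (ψ : E3 → ℝ) (w : E3 → ℂ) (x : E3) : ℂ :=
  (lapR ψ x : ℝ) * w x + 2 * ∑ j : Fin 3, (dR ψ j x : ℝ) * dMagS A j w x

open scoped ComplexConjugate

section DirectionalDerivatives

variable {E F ι : Type*} [NormedAddCommGroup E] [NormedSpace ℝ E]
  [NormedAddCommGroup F] [NormedSpace ℝ F]

/-- The directional derivative `∂ⱼ` along the `j`-th vector of a family `e`, which is not assumed
to be a basis. -/
def partialDeriv (e : ι → E) (j : ι) (f : E → F) (x : E) : F := fderiv ℝ f x (e j)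

/-- The sum of squares `Σⱼ ∂ⱼ²` along a family `e`; the Laplacian if `e` is an orthonormal basis. -/
def laplacianAlong [Fintype ι] (e : ι → E) (f : E → F) (x : E) : F :=
  ∑ j, partialDeriv e j (partialDeriv e j f) x

variable {e : ι → E} {x : E}

local notation "∂ₑ" => partialDeriv e
local notation "Δₑ" => laplacianAlong e

lemma contDiffAt_partialDeriv {f : E → F} {m n : WithTop ℕ∞} (hf : ContDiffAt ℝ n f x)
    (hmn : m + 1 ≤ n) (j : ι) : ContDiffAt ℝ m (∂ₑ j f) x :=
  (hf.fderiv_right hmn).clm_apply contDiffAt_const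

lemma differentiableAt_partialDeriv {f : E → F} (hf : ContDiffAt ℝ 2 f x) (j : ι) :
    DifferentiableAt ℝ (∂ₑ j f) x :=
  (contDiffAt_partialDeriv (m := 1) hf (by norm_num) j).differentiableAt (by simp)

lemma partialDeriv_comm {f : E → F} (hf : ContDiffAt ℝ 2 f x) (j k : ι) :
    ∂ₑ j (∂ₑ k f) x = ∂ₑ k (∂ₑ j f) x := by
  have second_deriv (j k : ι) : ∂ₑ j (∂ₑ k f) x = fderiv ℝ (fderiv ℝ f) x (e j) (e k) := by
    have hdf : DifferentiableAt ℝ (fderiv ℝ f) x :=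
      (hf.fderiv_right (m := 1) (by norm_num)).differentiableAt (by simp)
    change fderiv ℝ (fun y => fderiv ℝ f y (e k)) x (e j) = _
    simp [fderiv_clm_apply hdf (differentiableAt_const _)]
  rw [second_deriv, second_deriv, (hf.isSymmSndFDerivAt (by simp)).eq]

lemma partialDeriv_add {f g : E → F} (hf : DifferentiableAt ℝ f x) (hg : DifferentiableAt ℝ g x)
    (j : ι) : ∂ₑ j (fun y => f y + g y) x = ∂ₑ j f x + ∂ₑ j g x := by
  simp [partialDeriv, fderiv_fun_add hf hg]

lemma partialDeriv_sub {f g : E → F} (hf : DifferentiableAt ℝ f x) (hg : DifferentiableAt ℝ g x)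
    (j : ι) : ∂ₑ j (fun y => f y - g y) x = ∂ₑ j f x - ∂ₑ j g x := by
  simp [partialDeriv, fderiv_fun_sub hf hg]

lemma partialDeriv_smul {φ : E → ℝ} {f : E → F} (hφ : DifferentiableAt ℝ φ x)
    (hf : DifferentiableAt ℝ f x) (j : ι) :
    ∂ₑ j (fun y => φ y • f y) x = ∂ₑ j φ x • f x + φ x • ∂ₑ j f x := by
  simp [partialDeriv, fderiv_fun_smul hφ hf, add_comm]

lemma partialDeriv_const_smul {f : E → F} (hf : DifferentiableAt ℝ f x) (r : ℝ) (j : ι) :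
    ∂ₑ j (fun y => r • f y) x = r • ∂ₑ j f x := by
  simp [partialDeriv, fderiv_fun_const_smul hf]

lemma partialDeriv_mul {f g : E → ℂ} (hf : DifferentiableAt ℝ f x) (hg : DifferentiableAt ℝ g x)
    (j : ι) : ∂ₑ j (fun y => f y * g y) x = ∂ₑ j f x * g x + f x * ∂ₑ j g x := by
  simp only [partialDeriv, fderiv_fun_mul hf hg, add_apply, smul_apply, smul_eq_mul]
  ring

lemma partialDeriv_conj (f : E → ℂ) (j : ι) :
    ∂ₑ j (fun y => conj (f y)) x = conj (∂ₑ j f x) := by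
  change fderiv ℝ (fun y => star (f y)) x (e j) = _
  rw [fderiv_star]
  rfl

lemma partialDeriv_ofReal {φ : E → ℝ} (hφ : DifferentiableAt ℝ φ x) (j : ι) :
    ∂ₑ j (fun y => (φ y : ℂ)) x = ((∂ₑ j φ x : ℝ) : ℂ) := by
  have h := (ofRealCLM.hasFDerivAt (x := φ x)).comp x hφ.hasFDerivAt
  exact DFunLike.congr_fun h.fderiv (e j)

variable [Fintype ι]

lemma contDiffAt_laplacianAlong {f : E → F} {m n : WithTop ℕ∞} (hf : ContDiffAt ℝ n f x)
    (hmn : m + 1 + 1 ≤ n) : ContDiffAt ℝ m (Δₑ f) x :=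
  ContDiffAt.sum fun j _ => contDiffAt_partialDeriv (contDiffAt_partialDeriv hf hmn j) le_rfl j

lemma differentiableAt_laplacianAlong {f : E → F} (hf : ContDiffAt ℝ 3 f x) :
    DifferentiableAt ℝ (Δₑ f) x :=
  (contDiffAt_laplacianAlong (m := 1) hf (by norm_num)).differentiableAt (by simp)

lemma sum_partialDeriv_gradient_smul {φ : E → ℝ} {f : E → F} (hφ : ContDiffAt ℝ 2 φ x)
    (hf : DifferentiableAt ℝ f x) :
    ∑ j, ∂ₑ j (fun y => ∂ₑ j φ y • f y) x = Δₑ φ x • f x + ∑ j, ∂ₑ j φ x • ∂ₑ j f x := by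
  simp only [partialDeriv_smul (differentiableAt_partialDeriv hφ _) hf, Finset.sum_add_distrib,
    laplacianAlong, Finset.sum_smul]

end DirectionalDerivatives

section MagneticConnection

variable {E ι : Type*} [NormedAddCommGroup E] [NormedSpace ℝ E]

/-- The magnetic derivative `∂ⱼᴬ = ∂ⱼ + iAⱼ` along the `j`-th vector of a family `e`. -/
def magDeriv (e : ι → E) (A : E → ι → ℝ) (j : ι) (f : E → ℂ) (x : E) : ℂ :=
  partialDeriv e j f x + I * A x j * f x

/-- The magnetic field `Bⱼₖ = ∂ⱼAₖ - ∂ₖAⱼ`, the curvature of the connection `magDeriv e A`. -/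
def magField (e : ι → E) (A : E → ι → ℝ) (j k : ι) (x : E) : ℝ :=
  partialDeriv e j (fun y => A y k) x - partialDeriv e k (fun y => A y j) x

variable {e : ι → E} {A : E → ι → ℝ} {x : E}

local notation "∂ₑ" => partialDeriv e
local notation "∇ᴬ" => magDeriv e A

lemma differentiableAt_ofReal_comp {φ : E → ℝ} (hφ : DifferentiableAt ℝ φ x) :
    DifferentiableAt ℝ (fun y => (φ y : ℂ)) x :=
  ofRealCLM.differentiableAt.comp x hφ

lemma differentiableAt_ofReal_mul {φ : E → ℝ} {f : E → ℂ} (hφ : DifferentiableAt ℝ φ x)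
    (hf : DifferentiableAt ℝ f x) : DifferentiableAt ℝ (fun y => φ y * f y) x :=
  (differentiableAt_ofReal_comp hφ).mul hf

lemma partialDeriv_mul_conj {f g : E → ℂ} (hf : DifferentiableAt ℝ f x)
    (hg : DifferentiableAt ℝ g x) (j : ι) :
    ∂ₑ j (fun y => f y * conj (g y)) x = ∇ᴬ j f x * conj (g x) + f x * conj (∇ᴬ j g x) := by
  have hg' : DifferentiableAt ℝ (fun y => conj (g y)) x := hg.star
  rw [partialDeriv_mul hf hg', partialDeriv_conj]
  simp only [magDeriv, map_add, map_mul, conj_I, conj_ofReal]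
  ring

lemma differentiableAt_normSq {f : E → ℂ} (hf : DifferentiableAt ℝ f x) :
    DifferentiableAt ℝ (fun y => normSq (f y)) x := by
  simpa only [normSq_eq_norm_sq] using hf.norm_sq ℝ

lemma partialDeriv_normSq {f : E → ℂ} (hf : DifferentiableAt ℝ f x) (j : ι) :
    ∂ₑ j (fun y => normSq (f y)) x = 2 * (f x * conj (∇ᴬ j f x)).re := by
  have h := partialDeriv_mul_conj (e := e) (A := A) hf hf j
  simp only [mul_conj, partialDeriv_ofReal (differentiableAt_normSq hf)] at h
  have h_re := congrArg re h
  simp only [ofReal_re, add_re, mul_re, conj_re, conj_im] at h_re ⊢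
  linarith

lemma magDeriv_add {f g : E → ℂ} (hf : DifferentiableAt ℝ f x) (hg : DifferentiableAt ℝ g x)
    (j : ι) : ∇ᴬ j (fun y => f y + g y) x = ∇ᴬ j f x + ∇ᴬ j g x := by
  simp only [magDeriv, partialDeriv_add hf hg]
  ring

lemma magDeriv_sum {κ : Type*} [Fintype κ] {f : κ → E → ℂ} (hf : ∀ k, DifferentiableAt ℝ (f k) x)
    (j : ι) : ∇ᴬ j (fun y => ∑ k, f k y) x = ∑ k, ∇ᴬ j (f k) x := by
  simp [magDeriv, partialDeriv, fderiv_fun_sum fun k _ => hf k, Finset.sum_add_distrib,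
    Finset.mul_sum]

lemma magDeriv_ofReal_mul {φ : E → ℝ} {f : E → ℂ} (hφ : DifferentiableAt ℝ φ x)
    (hf : DifferentiableAt ℝ f x) (j : ι) :
    ∇ᴬ j (fun y => φ y * f y) x = (∂ₑ j φ x : ℝ) * f x + φ x * ∇ᴬ j f x := by
  simp only [magDeriv, ← real_smul, partialDeriv_smul hφ hf]
  simp only [real_smul]
  ring

lemma magDeriv_const_mul {f : E → ℂ} (hf : DifferentiableAt ℝ f x) (z : ℂ) (j : ι) :
    ∇ᴬ j (fun y => z * f y) x = z * ∇ᴬ j f x := by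
  simp only [magDeriv, partialDeriv, fderiv_const_mul hf, smul_apply, smul_eq_mul]
  ring

lemma differentiableAt_magDeriv {w : E → ℂ} {k : ι} (hA : DifferentiableAt ℝ (fun y => A y k) x)
    (hw : ContDiffAt ℝ 2 w x) : DifferentiableAt ℝ (∇ᴬ k w) x := by
  have hIAw : DifferentiableAt ℝ (fun y => I * A y k * w y) x := by
    simpa only [mul_assoc] using
      (differentiableAt_ofReal_mul hA (hw.differentiableAt (by simp))).const_mul I
  exact (differentiableAt_partialDeriv hw k).add hIAw

lemma differentiableAt_partialDeriv_mul_magDeriv {w : E → ℂ} {φ : E → ℝ} {k : ι}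
    (hA : DifferentiableAt ℝ (fun y => A y k) x) (hw : ContDiffAt ℝ 2 w x)
    (hφ : ContDiffAt ℝ 2 φ x) :
    DifferentiableAt ℝ (fun y => (∂ₑ k φ y : ℝ) * ∇ᴬ k w y) x :=
  differentiableAt_ofReal_mul (differentiableAt_partialDeriv hφ k) (differentiableAt_magDeriv hA hw)

lemma magDeriv_comm {w : E → ℂ} {j k : ι} (hAj : DifferentiableAt ℝ (fun y => A y j) x)
    (hAk : DifferentiableAt ℝ (fun y => A y k) x) (hw : ContDiffAt ℝ 2 w x) :
    ∇ᴬ j (∇ᴬ k w) x = ∇ᴬ k (∇ᴬ j w) x + I * magField e A j k x * w x := by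
  have hw' : DifferentiableAt ℝ w x := hw.differentiableAt (by simp)
  have expand {j k : ι} (hAk : DifferentiableAt ℝ (fun y => A y k) x) : ∇ᴬ j (∇ᴬ k w) x =
      ∇ᴬ j (∂ₑ k w) x + ((∂ₑ j (fun y => A y k) x : ℝ) * (I * w x) + A x k * (I * ∇ᴬ j w x)) := by
    have hIw : DifferentiableAt ℝ (fun y => I * w y) x := hw'.const_mul I
    rw [← magDeriv_const_mul hw', ← magDeriv_ofReal_mul hAk hIw,
      ← magDeriv_add (differentiableAt_partialDeriv hw k) (differentiableAt_ofReal_mul hAk hIw)]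
    congr 1 with y
    simp only [magDeriv]
    ring
  rw [expand hAk, expand hAj]
  simp only [magDeriv, partialDeriv_comm hw j k, magField]
  push_cast
  ring

end MagneticConnection

lemma ofReal_re_sum_mul_conj {ι : Type*} [Fintype ι] {u : ι → ℂ} {H : ι → ι → ℝ}
    (hH : ∀ j k, H j k = H k j) :
    ((∑ j, ∑ k, u j * H j k * conj (u k)).re : ℂ) = ∑ j, ∑ k, u j * H j k * conj (u k) := by
  rw [← conj_eq_iff_re]
  simp only [map_sum, map_mul, conj_ofReal, conj_conj]
  rw [Finset.sum_comm]
  refine Finset.sum_congr rfl fun j _ => Finset.sum_congr rfl fun k _ => ?_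
  rw [hH k j]
  ring

section Morawetz

variable {E ι : Type*} [NormedAddCommGroup E] [NormedSpace ℝ E] [Fintype ι]

/-- The magnetic Laplacian `Δ_A = Σⱼ (∂ⱼᴬ)²` along a family `e`. -/
def magLaplacian (e : ι → E) (A : E → ι → ℝ) (w : E → ℂ) (x : E) : ℂ :=
  ∑ j, magDeriv e A j (magDeriv e A j w) x

/-- The commutator `[Δ_A, ψ]w`, in the expanded form `(Δψ)w + 2 Σⱼ (∂ⱼψ)(∂ⱼᴬw)`. -/
def magCommutator (e : ι → E) (A : E → ι → ℝ) (ψ : E → ℝ) (w : E → ℂ) (x : E) : ℂ :=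
  (laplacianAlong e ψ x : ℝ) * w x
    + 2 * ∑ j, (partialDeriv e j ψ x : ℝ) * magDeriv e A j w x

/-- The kinetic energy density `|∂ᴬw|²`. -/
def magGradNormSq (e : ι → E) (A : E → ι → ℝ) (w : E → ℂ) (x : E) : ℝ :=
  ∑ j, normSq (magDeriv e A j w x)

/-- The energy density `c|w|² + |∂ᴬw|²` of the operator `-Δ_A + c`. -/
def magEnergyDensity (e : ι → E) (A : E → ι → ℝ) (c w : E → ℂ) (x : E) : ℂ :=
  c x * (normSq (w x) : ℝ) + (magGradNormSq e A w x : ℝ)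

/-- The current `Q` whose divergence is computed by the Morawetz identity with potential `c` and
multiplier `[Δ_A, ψ]w`. -/
def morawetzCurrent (e : ι → E) (A : E → ι → ℝ) (ψ : E → ℝ) (c w : E → ℂ) (j : ι) (x : E) : ℂ :=
  magDeriv e A j w x * conj (magCommutator e A ψ w x)
    - (1 / 2 : ℂ) * (partialDeriv e j (laplacianAlong e ψ) x : ℝ) * (normSq (w x) : ℝ)
    - (partialDeriv e j ψ x : ℝ) * magEnergyDensity e A c w x

variable {e : ι → E} {A : E → ι → ℝ} {w : E → ℂ} {ψ : E → ℝ} {c : E → ℂ} {x : E}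

local notation "∂ₑ" => partialDeriv e
local notation "Δₑ" => laplacianAlong e
local notation "∇ᴬ" => magDeriv e A
local notation "Δᴬ" => magLaplacian e A

lemma sum_partialDeriv_magDeriv_mul_conj {g : E → ℂ}
    (hA : ∀ j, DifferentiableAt ℝ (fun y => A y j) x) (hw : ContDiffAt ℝ 2 w x)
    (hg : DifferentiableAt ℝ g x) :
    ∑ j, ∂ₑ j (fun y => ∇ᴬ j w y * conj (g y)) x
      = Δᴬ w x * conj (g x) + ∑ j, ∇ᴬ j w x * conj (∇ᴬ j g x) := by
  simp only [partialDeriv_mul_conj (A := A) (differentiableAt_magDeriv (hA _) hw) hg,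
    Finset.sum_add_distrib, magLaplacian, Finset.sum_mul]

lemma differentiableAt_magGradNormSq (hA : ∀ j, DifferentiableAt ℝ (fun y => A y j) x)
    (hw : ContDiffAt ℝ 2 w x) : DifferentiableAt ℝ (magGradNormSq e A w) x :=
  DifferentiableAt.fun_sum fun j _ =>
    differentiableAt_normSq (differentiableAt_magDeriv (hA j) hw)

lemma partialDeriv_magGradNormSq (hA : ∀ j, DifferentiableAt ℝ (fun y => A y j) x)
    (hw : ContDiffAt ℝ 2 w x) (k : ι) :
    ∂ₑ k (magGradNormSq e A w) x = 2 * ∑ j, (∇ᴬ j w x * conj (∇ᴬ k (∇ᴬ j w) x)).re := by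
  have hdw (j : ι) : DifferentiableAt ℝ (∇ᴬ j w) x := differentiableAt_magDeriv (hA j) hw
  have hsum : ∂ₑ k (magGradNormSq e A w) x = ∑ j, ∂ₑ k (fun y => normSq (∇ᴬ j w y)) x := by
    change fderiv ℝ (fun y => ∑ j, normSq (∇ᴬ j w y)) x (e k) = _
    simp [partialDeriv, fderiv_fun_sum fun j _ => differentiableAt_normSq (hdw j)]
  simp only [hsum, partialDeriv_normSq (A := A) (hdw _), Finset.mul_sum]

lemma differentiableAt_sum_partialDeriv_mul_magDeriv
    (hA : ∀ j, DifferentiableAt ℝ (fun y => A y j) x) (hw : ContDiffAt ℝ 2 w x)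
    (hψ : ContDiffAt ℝ 2 ψ x) :
    DifferentiableAt ℝ (fun y => ∑ k, (∂ₑ k ψ y : ℝ) * ∇ᴬ k w y) x :=
  .fun_sum fun k _ => differentiableAt_partialDeriv_mul_magDeriv (hA k) hw hψ

lemma differentiableAt_magCommutator (hA : ∀ j, DifferentiableAt ℝ (fun y => A y j) x)
    (hw : ContDiffAt ℝ 2 w x) (hψ : ContDiffAt ℝ 3 ψ x) :
    DifferentiableAt ℝ (magCommutator e A ψ w) x :=
  (differentiableAt_ofReal_mul (differentiableAt_laplacianAlong hψ)
    (hw.differentiableAt (by simp))).fun_add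
  ((differentiableAt_sum_partialDeriv_mul_magDeriv hA hw (hψ.of_le (by norm_num))).const_mul 2)

lemma magDeriv_magCommutator (hA : ∀ j, DifferentiableAt ℝ (fun y => A y j) x)
    (hw : ContDiffAt ℝ 2 w x) (hψ : ContDiffAt ℝ 3 ψ x) (j : ι) :
    ∇ᴬ j (magCommutator e A ψ w) x
      = (∂ₑ j (Δₑ ψ) x : ℝ) * w x + (Δₑ ψ x : ℝ) * ∇ᴬ j w x
        + 2 * ∑ k, ((∂ₑ j (∂ₑ k ψ) x : ℝ) * ∇ᴬ k w x + (∂ₑ k ψ x : ℝ) * ∇ᴬ j (∇ᴬ k w) x) := by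
  have hw' : DifferentiableAt ℝ w x := hw.differentiableAt (by simp)
  have hψ' : ContDiffAt ℝ 2 ψ x := hψ.of_le (by norm_num)
  have hΔψ : DifferentiableAt ℝ (Δₑ ψ) x := differentiableAt_laplacianAlong hψ
  have hsum := differentiableAt_sum_partialDeriv_mul_magDeriv (e := e) hA hw hψ'
  simp only [← magDeriv_ofReal_mul (differentiableAt_partialDeriv hψ' _)
      (differentiableAt_magDeriv (hA _) hw), ← magDeriv_ofReal_mul hΔψ hw',
    ← magDeriv_sum fun k => differentiableAt_partialDeriv_mul_magDeriv (e := e) (hA k) hw hψ',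
    ← magDeriv_const_mul hsum]
  exact magDeriv_add (differentiableAt_ofReal_mul hΔψ hw') (hsum.const_mul 2) j

lemma re_magDeriv_mul_conj_magDeriv_magCommutator
    (hA : ∀ j, DifferentiableAt ℝ (fun y => A y j) x) (hw : ContDiffAt ℝ 2 w x)
    (hψ : ContDiffAt ℝ 3 ψ x) (j : ι) :
    (∇ᴬ j w x * conj (∇ᴬ j (magCommutator e A ψ w) x)).re
      = Δₑ ψ x * normSq (∇ᴬ j w x) + 1 / 2 * (∂ₑ j (Δₑ ψ) x * ∂ₑ j (fun y => normSq (w y)) x)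
        + 2 * ∑ k, ∂ₑ k ψ x * (∇ᴬ j w x * conj (∇ᴬ k (∇ᴬ j w) x)).re
        + 2 * ∑ k, (∇ᴬ j w x * (∂ₑ j (∂ₑ k ψ) x : ℝ) * conj (∇ᴬ k w x)).re
        + 2 * ∑ k, (conj (w x) * ((magField e A j k x : ℝ) * ∇ᴬ j w x * (∂ₑ k ψ x : ℝ))).im := by
  have h_zeroth : (∇ᴬ j w x * conj ((∂ₑ j (Δₑ ψ) x : ℝ) * w x + (Δₑ ψ x : ℝ) * ∇ᴬ j w x)).re
      = Δₑ ψ x * normSq (∇ᴬ j w x)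
        + 1 / 2 * (∂ₑ j (Δₑ ψ) x * ∂ₑ j (fun y => normSq (w y)) x) := by
    rw [partialDeriv_normSq (A := A) (hw.differentiableAt (by simp))]
    simp only [map_add, map_mul, conj_ofReal, add_re, mul_re, ofReal_re, conj_re, add_im, mul_im,
      ofReal_im, conj_im, normSq_apply]
    ring
  have h_first (k : ι) : (∇ᴬ j w x * conj ((∂ₑ j (∂ₑ k ψ) x : ℝ) * ∇ᴬ k w x
        + (∂ₑ k ψ x : ℝ) * ∇ᴬ j (∇ᴬ k w) x)).re
      = ∂ₑ k ψ x * (∇ᴬ j w x * conj (∇ᴬ k (∇ᴬ j w) x)).re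
        + (∇ᴬ j w x * (∂ₑ j (∂ₑ k ψ) x : ℝ) * conj (∇ᴬ k w x)).re
        + (conj (w x) * ((magField e A j k x : ℝ) * ∇ᴬ j w x * (∂ₑ k ψ x : ℝ))).im := by
    rw [magDeriv_comm (hA j) (hA k) hw]
    simp only [map_add, map_mul, conj_ofReal, conj_I, add_re, mul_re, neg_re, ofReal_re, conj_re,
      I_re, add_im, mul_im, neg_im, ofReal_im, conj_im, I_im]
    ring
  have h_two (z : ℂ) : (2 * z).re = 2 * z.re := by simp
  rw [magDeriv_magCommutator hA hw hψ, map_add, mul_add, add_re, h_zeroth, map_mul, conj_ofNat,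
    mul_left_comm (∇ᴬ j w x), h_two, map_sum, Finset.mul_sum, re_sum]
  simp only [h_first, Finset.sum_add_distrib]
  ring

lemma re_sum_magDeriv_mul_conj_magDeriv_magCommutator
    (hA : ∀ j, DifferentiableAt ℝ (fun y => A y j) x) (hw : ContDiffAt ℝ 2 w x)
    (hψ : ContDiffAt ℝ 3 ψ x) :
    (∑ j, ∇ᴬ j w x * conj (∇ᴬ j (magCommutator e A ψ w) x)).re
      = Δₑ ψ x * magGradNormSq e A w x
        + 1 / 2 * ∑ j, ∂ₑ j (Δₑ ψ) x * ∂ₑ j (fun y => normSq (w y)) x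
        + ∑ j, ∂ₑ j ψ x * ∂ₑ j (magGradNormSq e A w) x
        + 2 * (∑ j, ∑ k, ∇ᴬ j w x * (∂ₑ j (∂ₑ k ψ) x : ℝ) * conj (∇ᴬ k w x)).re
        + 2 * (conj (w x) * ∑ j, ∑ k,
            (magField e A j k x : ℝ) * ∇ᴬ j w x * (∂ₑ k ψ x : ℝ)).im := by
  have h_transport : ∑ k, ∂ₑ k ψ x * ∂ₑ k (magGradNormSq e A w) x
      = 2 * ∑ j, ∑ k, ∂ₑ k ψ x * (∇ᴬ j w x * conj (∇ᴬ k (∇ᴬ j w) x)).re := by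
    simp only [partialDeriv_magGradNormSq hA hw, mul_left_comm _ (2 : ℝ), Finset.mul_sum]
    exact Finset.sum_comm
  simp only [re_sum, re_magDeriv_mul_conj_magDeriv_magCommutator hA hw hψ, Finset.sum_add_distrib,
    ← Finset.mul_sum, h_transport, magGradNormSq]
  simp only [Finset.mul_sum, im_sum]

lemma re_mul_conj_magCommutator (hw : DifferentiableAt ℝ w x) (z : ℂ) :
    (z * w x * conj (magCommutator e A ψ w x)).re
      = z.re * (Δₑ ψ x * normSq (w x) + ∑ j, ∂ₑ j ψ x * ∂ₑ j (fun y => normSq (w y)) x)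
        - 2 * z.im * (∑ j, w x * (∂ₑ j ψ x : ℝ) * conj (∇ᴬ j w x)).im := by
  have h_zeroth : (z * w x * conj ((Δₑ ψ x : ℝ) * w x)).re
      = z.re * (Δₑ ψ x * normSq (w x)) := by
    simp only [map_mul, conj_ofReal, mul_re, ofReal_re, conj_re, mul_im, ofReal_im, conj_im,
      normSq_apply]
    ring
  have h_first (j : ι) : (z * w x * conj (2 * ((∂ₑ j ψ x : ℝ) * ∇ᴬ j w x))).re
      = z.re * (∂ₑ j ψ x * ∂ₑ j (fun y => normSq (w y)) x)
        - 2 * z.im * (w x * (∂ₑ j ψ x : ℝ) * conj (∇ᴬ j w x)).im := by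
    rw [partialDeriv_normSq (A := A) hw]
    simp only [map_mul, conj_ofReal, conj_ofNat, mul_re, ofReal_re, conj_re, re_ofNat, mul_im,
      ofReal_im, conj_im, im_ofNat]
    ring
  rw [magCommutator, Finset.mul_sum, map_add, map_sum, mul_add, Finset.mul_sum, add_re, re_sum,
    h_zeroth]
  simp only [h_first, Finset.sum_sub_distrib, ← Finset.mul_sum, im_sum]
  ring

lemma differentiableAt_magEnergyDensity (hA : ∀ j, DifferentiableAt ℝ (fun y => A y j) x)
    (hw : ContDiffAt ℝ 2 w x) (hc : DifferentiableAt ℝ c x) :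
    DifferentiableAt ℝ (magEnergyDensity e A c w) x :=
  (hc.fun_mul (differentiableAt_ofReal_comp
    (differentiableAt_normSq (hw.differentiableAt (by simp))))).fun_add
  (differentiableAt_ofReal_comp (differentiableAt_magGradNormSq hA hw))

lemma partialDeriv_magEnergyDensity (hA : ∀ j, DifferentiableAt ℝ (fun y => A y j) x)
    (hw : ContDiffAt ℝ 2 w x) (hc : DifferentiableAt ℝ c x) (j : ι) :
    ∂ₑ j (magEnergyDensity e A c w) x
      = ∂ₑ j c x * (normSq (w x) : ℝ) + c x * (∂ₑ j (fun y => normSq (w y)) x : ℝ)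
        + (∂ₑ j (magGradNormSq e A w) x : ℝ) := by
  have hsq : DifferentiableAt ℝ (fun y => normSq (w y)) x :=
    differentiableAt_normSq (hw.differentiableAt (by simp))
  have hgrad : DifferentiableAt ℝ (magGradNormSq e A w) x := differentiableAt_magGradNormSq hA hw
  rw [← partialDeriv_ofReal hsq, ← partialDeriv_ofReal hgrad,
    ← partialDeriv_mul hc (differentiableAt_ofReal_comp hsq)]
  exact partialDeriv_add (hc.fun_mul (differentiableAt_ofReal_comp hsq))
    (differentiableAt_ofReal_comp hgrad) j

lemma re_sum_partialDeriv_gradient_smul_magEnergyDensity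
    (hA : ∀ j, DifferentiableAt ℝ (fun y => A y j) x) (hw : ContDiffAt ℝ 2 w x)
    (hψ : ContDiffAt ℝ 2 ψ x) (hc : DifferentiableAt ℝ c x) :
    (∑ j, ∂ₑ j (fun y => ∂ₑ j ψ y • magEnergyDensity e A c w y) x).re
      = (c x).re * (Δₑ ψ x * normSq (w x) + ∑ j, ∂ₑ j ψ x * ∂ₑ j (fun y => normSq (w y)) x)
        + (∑ j, (∂ₑ j ψ x : ℝ) * conj (∂ₑ j c x)).re * normSq (w x)
        + (Δₑ ψ x * magGradNormSq e A w x + ∑ j, ∂ₑ j ψ x * ∂ₑ j (magGradNormSq e A w) x) := by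
  rw [sum_partialDeriv_gradient_smul hψ (differentiableAt_magEnergyDensity hA hw hc)]
  have h_first (j : ι) : (∂ₑ j ψ x • ∂ₑ j (magEnergyDensity e A c w) x).re
      = (c x).re * (∂ₑ j ψ x * ∂ₑ j (fun y => normSq (w y)) x)
        + ((∂ₑ j ψ x : ℝ) * conj (∂ₑ j c x)).re * normSq (w x)
        + ∂ₑ j ψ x * ∂ₑ j (magGradNormSq e A w) x := by
    rw [partialDeriv_magEnergyDensity hA hw hc]
    simp only [smul_re, smul_eq_mul, add_re, mul_re, ofReal_re, conj_re, ofReal_im, conj_im]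
    ring
  simp only [add_re, re_sum, h_first, Finset.sum_add_distrib, ← Finset.mul_sum, ← Finset.sum_mul,
    magEnergyDensity, smul_re, smul_eq_mul, re_mul_ofReal, ofReal_re]
  ring

lemma sum_partialDeriv_morawetzCurrent (hA : ∀ j, DifferentiableAt ℝ (fun y => A y j) x)
    (hw : ContDiffAt ℝ 2 w x) (hψ : ContDiffAt ℝ 4 ψ x) (hc : DifferentiableAt ℝ c x) :
    ∑ j, ∂ₑ j (morawetzCurrent e A ψ c w j) x
      = (∑ j, ∂ₑ j (fun y => ∇ᴬ j w y * conj (magCommutator e A ψ w y)) x)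
        - ((1 / 2 : ℝ) • ∑ j, ∂ₑ j (fun y => ∂ₑ j (Δₑ ψ) y • normSq (w y)) x : ℝ)
        - ∑ j, ∂ₑ j (fun y => ∂ₑ j ψ y • magEnergyDensity e A c w y) x := by
  have hw' : DifferentiableAt ℝ w x := hw.differentiableAt (by simp)
  have hψ₂ : ContDiffAt ℝ 2 ψ x := hψ.of_le (by norm_num)
  have hΔψ : ContDiffAt ℝ 2 (Δₑ ψ) x := contDiffAt_laplacianAlong hψ (by norm_num)
  have h_comm (j : ι) : DifferentiableAt ℝ
      (fun y => ∇ᴬ j w y * conj (magCommutator e A ψ w y)) x :=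
    (differentiableAt_magDeriv (hA j) hw).mul
      (differentiableAt_magCommutator hA hw (hψ.of_le (by norm_num))).star
  have h_mass (j : ι) : DifferentiableAt ℝ (fun y => ∂ₑ j (Δₑ ψ) y • normSq (w y)) x :=
    (differentiableAt_partialDeriv hΔψ j).fun_smul (differentiableAt_normSq hw')
  have h_half_mass (j : ι) : DifferentiableAt ℝ
      (fun y => (1 / 2 : ℝ) • (∂ₑ j (Δₑ ψ) y • normSq (w y))) x :=
    (h_mass j).fun_const_smul (1 / 2 : ℝ)
  have h_energy (j : ι) : DifferentiableAt ℝ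
      (fun y => ∂ₑ j ψ y • magEnergyDensity e A c w y) x :=
    (differentiableAt_partialDeriv hψ₂ j).fun_smul (differentiableAt_magEnergyDensity hA hw hc)
  have h_current (j : ι) : morawetzCurrent e A ψ c w j = fun y =>
      ∇ᴬ j w y * conj (magCommutator e A ψ w y)
        - (((1 / 2 : ℝ) • (∂ₑ j (Δₑ ψ) y • normSq (w y)) : ℝ) : ℂ)
        - ∂ₑ j ψ y • magEnergyDensity e A c w y := by
    ext y
    simp [morawetzCurrent, mul_assoc]
  simp only [h_current,
    partialDeriv_sub ((h_comm _).fun_sub (differentiableAt_ofReal_comp (h_half_mass _)))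
      (h_energy _),
    partialDeriv_sub (h_comm _) (differentiableAt_ofReal_comp (h_half_mass _)),
    partialDeriv_ofReal (h_half_mass _), partialDeriv_const_smul (h_mass _),
    Finset.sum_sub_distrib, ← ofReal_sum, ← Finset.smul_sum]

theorem morawetz_identity_first_multiplier_general (hA : ∀ j, DifferentiableAt ℝ (fun y => A y j) x)
    (hw : ContDiffAt ℝ 2 w x) (hψ : ContDiffAt ℝ 4 ψ x) (hc : DifferentiableAt ℝ c x) :
    (∑ j, ∂ₑ j (morawetzCurrent e A ψ c w j) x).re
      = ((Δᴬ w x - c x * w x) * conj (magCommutator e A ψ w x)).re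
        - 1 / 2 * Δₑ (Δₑ ψ) x * normSq (w x)
        + 2 * (∑ j, ∑ k, ∇ᴬ j w x * (∂ₑ j (∂ₑ k ψ) x : ℝ) * conj (∇ᴬ k w x)).re
        - (∑ j, (∂ₑ j ψ x : ℝ) * conj (∂ₑ j c x)).re * normSq (w x)
        + 2 * (conj (w x) * ∑ j, ∑ k,
            (magField e A j k x : ℝ) * ∇ᴬ j w x * (∂ₑ k ψ x : ℝ)).im
        - 2 * (c x).im * (∑ j, w x * (∂ₑ j ψ x : ℝ) * conj (∇ᴬ j w x)).im := by
  have hw' : DifferentiableAt ℝ w x := hw.differentiableAt (by simp)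
  have hψ₃ : ContDiffAt ℝ 3 ψ x := hψ.of_le (by norm_num)
  have hψ₂ : ContDiffAt ℝ 2 ψ x := hψ.of_le (by norm_num)
  have hΔψ : ContDiffAt ℝ 2 (Δₑ ψ) x := contDiffAt_laplacianAlong hψ (by norm_num)
  rw [sum_partialDeriv_morawetzCurrent hA hw hψ hc, sub_re, sub_re, ofReal_re,
    sum_partialDeriv_magDeriv_mul_conj hA hw (differentiableAt_magCommutator hA hw hψ₃), add_re,
    re_sum_magDeriv_mul_conj_magDeriv_magCommutator hA hw hψ₃,
    sum_partialDeriv_gradient_smul hΔψ (differentiableAt_normSq hw'),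
    re_sum_partialDeriv_gradient_smul_magEnergyDensity hA hw hψ₂ hc, sub_mul, sub_re,
    re_mul_conj_magCommutator hw']
  simp only [smul_eq_mul]
  ring

end Morawetz


/-- Morawetz-type divergence identity for the first multiplier. -/
theorem morawetz_identity_first_multiplier
    (A : E3 → Fin 3 → ℝ) (hA : ∀ j, ContDiff ℝ 1 (fun x => A x j))
    (w : E3 → ℂ) (hw : ContDiff ℝ (⊤ : ℕ∞) w)
    (ψ : E3 → ℝ) (hψ : ContDiff ℝ (⊤ : ℕ∞) ψ)
    (c : E3 → ℂ) (hc : ContDiff ℝ 1 c)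
    (Q : Fin 3 → E3 → ℂ)
    (hQ : ∀ j x, Q j x =
      dMagS A j w x * (starRingEnd ℂ) (commMag A ψ w x)
        - (1/2 : ℂ) * (dR (fun y => lapR ψ y) j x : ℝ) * (Complex.normSq (w x) : ℝ)
        - (dR ψ j x : ℝ) * (c x * (Complex.normSq (w x) : ℝ)
            + ((∑ k : Fin 3, Complex.normSq (dMagS A k w x) : ℝ) : ℂ))) :
    ∀ x : E3,
      (((∑ j : Fin 3, fderiv ℝ (Q j) x (e3 j)).re : ℝ) : ℂ)
        = ((((lapMagS A w x - c x * w x) * (starRingEnd ℂ) (commMag A ψ w x)).re : ℝ) : ℂ)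
          - (1/2 : ℂ) * (lapR (fun y => lapR ψ y) x : ℝ) * (Complex.normSq (w x) : ℝ)
          + 2 * ∑ j : Fin 3, ∑ k : Fin 3,
              dMagS A j w x * (hess ψ j k x : ℝ) * (starRingEnd ℂ) (dMagS A k w x)
          - (((∑ j : Fin 3, (dR ψ j x : ℝ) * (starRingEnd ℂ) (dC c j x)).re : ℝ) : ℂ)
              * (Complex.normSq (w x) : ℝ)
          + 2 * ((((starRingEnd ℂ) (w x) * ∑ j : Fin 3, ∑ k : Fin 3,
              (Bfield A j k x : ℝ) * dMagS A j w x * (dR ψ k x : ℝ)).im : ℝ) : ℂ)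
          - 2 * ((c x).im : ℝ) *
              (((∑ j : Fin 3, w x * (dR ψ j x : ℝ) * (starRingEnd ℂ) (dMagS A j w x)).im : ℝ) : ℂ) := by
  intro x
  obtain rfl : Q = morawetzCurrent e3 A ψ c w := funext₂ hQ
  have hψ' (n : ℕ) : ContDiffAt ℝ n ψ x := (contDiff_infty.1 hψ n).contDiffAt
  have h_hess (j k : Fin 3) : hess ψ j k x = hess ψ k j x := partialDeriv_comm (hψ' 2) j k
  have h_real := morawetz_identity_first_multiplier_general (e := e3)
    (fun j => (hA j).differentiable (by simp) x) (contDiff_infty.1 hw 2).contDiffAt (hψ' 4)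
    (hc.differentiable (by simp) x)
  refine (congrArg ofReal h_real).trans ?_
  rw [← ofReal_re_sum_mul_conj h_hess]
  push_cast
  rfl
end
end

section
/- Generalized Hardy inequality with radial derivative: for every σ > −1 and every φ ∈ C_c^∞(ℝ³;ℂ), one has ( ∫_{ℝ³} |x|^{2σ−1} |φ(x)|² dx )^{1/2} ≤ (2/(σ+1)) ( ∫_{ℝ³} |x|^{2σ+1} |(x/|x|)·∇φ(x)|² dx )^{1/2}. -/
open MeasureTheory Complex
open scoped ENNReal

noncomputable section

/-- the radial derivative (x/|x|)·∇φ -/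
def radialDeriv (φ : E3 → ℂ) (x : E3) : ℂ :=
  ∑ j : Fin 3, ((x j / ‖x‖ : ℝ) : ℂ) * fderiv ℝ φ x (e3 j)

/-!
Integrating the derivative of `φ` along the ray from `x` to infinity bounds `‖φ x‖` by
`∫₁^∞ t⁻¹ h (t x) dt`, where `h y = ‖Dφ(y) y‖` is `‖y‖` times the radial derivative. After
multiplication by `‖x‖ ^ b` the right-hand side becomes an average of dilates of `‖·‖ ^ b * h` with
kernel `t ^ (-1 - b)`. In dimension `d`, dilation by `t` has norm `t ^ (-d / p)` on `L^p`, so by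
Minkowski's inequality (here obtained from Jensen's) averaging has norm at most
`∫₁^∞ t ^ (-1 - b - d / p) dt = (b + d / p)⁻¹`. For `d = 3`, `p = 2`, `b = σ - 1 / 2` this is
`1 / (σ + 1)`, half the constant claimed.
-/

open Module

section HomogeneousKernel

theorem rpow_lintegral_mul_le {α : Type*} [MeasurableSpace α] {ν : Measure α} {p : ℝ} (hp : 1 ≤ p)
    {w f : α → ℝ≥0∞} (hw : AEMeasurable w ν) (hf : AEMeasurable f ν) :
    (∫⁻ t, w t * f t ∂ν) ^ p ≤ (∫⁻ t, w t ∂ν) ^ (p - 1) * ∫⁻ t, w t * f t ^ p ∂ν := by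
  have hp₀ : 0 < p := by linarith
  have hexp : 0 ≤ 1 - p⁻¹ := sub_nonneg.2 (inv_le_one_of_one_le₀ hp)
  have hsplit (t : α) : w t * f t = w t ^ (1 - p⁻¹) * (w t * f t ^ p) ^ p⁻¹ := by
    rw [ENNReal.mul_rpow_of_nonneg _ _ (by positivity), ENNReal.rpow_rpow_inv hp₀.ne', ← mul_assoc,
      ← ENNReal.rpow_add_of_nonneg _ _ hexp (by positivity), sub_add_cancel, ENNReal.rpow_one]
  calc (∫⁻ t, w t * f t ∂ν) ^ p
      ≤ ((∫⁻ t, w t ∂ν) ^ (1 - p⁻¹) * (∫⁻ t, w t * f t ^ p ∂ν) ^ p⁻¹) ^ p := by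
        simp only [hsplit]
        gcongr
        exact ENNReal.lintegral_mul_norm_pow_le hw (by fun_prop) hexp (by positivity)
          (sub_add_cancel _ _)
    _ = (∫⁻ t, w t ∂ν) ^ (p - 1) * ∫⁻ t, w t * f t ^ p ∂ν := by
        rw [ENNReal.mul_rpow_of_nonneg _ _ hp₀.le, ENNReal.rpow_inv_rpow hp₀.ne',
          ← ENNReal.rpow_mul, sub_mul, one_mul, inv_mul_cancel₀ hp₀.ne']

variable {E : Type*} [NormedAddCommGroup E] [NormedSpace ℝ E] [FiniteDimensional ℝ E]
  [MeasurableSpace E] [BorelSpace E] (μ : Measure E) [μ.IsAddHaarMeasure]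

theorem lintegral_comp_smul (f : E → ℝ≥0∞) {r : ℝ} (hr : r ≠ 0) :
    ∫⁻ x, f (r • x) ∂μ = ‖r‖ₑ ^ (-finrank ℝ E : ℝ) * ∫⁻ x, f x ∂μ := by
  have hemb : MeasurableEmbedding (r • · : E → E) :=
    (Homeomorph.smulOfNeZero r hr).measurableEmbedding
  rw [← hemb.lintegral_map, Measure.map_addHaar_smul μ hr, lintegral_smul_measure, smul_eq_mul,
    abs_inv, abs_pow, ENNReal.ofReal_inv_of_pos (by positivity), ENNReal.ofReal_pow (abs_nonneg r),
    ← Real.enorm_eq_ofReal_abs, ENNReal.rpow_neg, ENNReal.rpow_natCast]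

theorem lintegral_rpow_enorm_rpow_mul_comp_smul {p : ℝ} (hp : 0 < p) (g : E → ℝ≥0∞) {r : ℝ}
    (hr : r ≠ 0) :
    ∫⁻ x, (‖r‖ₑ ^ (finrank ℝ E / p) * g (r • x)) ^ p ∂μ = ∫⁻ x, g x ^ p ∂μ := by
  have hr₀ : ‖r‖ₑ ≠ 0 := enorm_ne_zero.2 hr
  simp only [ENNReal.mul_rpow_of_nonneg _ _ hp.le, ← ENNReal.rpow_mul, div_mul_cancel₀ _ hp.ne']
  rw [lintegral_const_mul' _ _ (ENNReal.rpow_ne_top_of_ne_zero hr₀ enorm_ne_top),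
    lintegral_comp_smul μ (fun x ↦ g x ^ p) hr, ← mul_assoc,
    ← ENNReal.rpow_add _ _ hr₀ enorm_ne_top, add_neg_cancel, ENNReal.rpow_zero, one_mul]

theorem lintegral_rpow_lintegral_mul_comp_smul_le {p : ℝ} (hp : 1 ≤ p) {ν : Measure ℝ} [SFinite ν]
    (hν : ∀ᵐ t ∂ν, t ≠ 0) {k : ℝ → ℝ≥0∞} (hk : Measurable k) {g : E → ℝ≥0∞} (hg : Measurable g) :
    ∫⁻ x, (∫⁻ t, k t * g (t • x) ∂ν) ^ p ∂μ ≤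
      (∫⁻ t, k t * ‖t‖ₑ ^ (-(finrank ℝ E / p)) ∂ν) ^ p * ∫⁻ x, g x ^ p ∂μ := by
  have hp₀ : 0 < p := by linarith
  have hgsmul : Measurable fun z : ℝ × E ↦ g (z.1 • z.2) := hg.comp measurable_smul
  set w : ℝ → ℝ≥0∞ := fun t ↦ k t * ‖t‖ₑ ^ (-(finrank ℝ E / p))
  have hw : Measurable w := by fun_prop
  -- The density `w` has total mass equal to the claimed constant, and the compensating factor
  -- `‖t‖ ^ (d / p)` turns the dilation by `t` into an isometry of `L^p`.
  have hjensen (x : E) : (∫⁻ t, k t * g (t • x) ∂ν) ^ p ≤ (∫⁻ t, w t ∂ν) ^ (p - 1) *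
      ∫⁻ t, w t * (‖t‖ₑ ^ (finrank ℝ E / p) * g (t • x)) ^ p ∂ν := by
    have : Measurable fun t : ℝ ↦ g (t • x) := hgsmul.comp measurable_prodMk_right
    have hweight : ∀ᵐ t ∂ν, k t * g (t • x) = w t * (‖t‖ₑ ^ (finrank ℝ E / p) * g (t • x)) := by
      filter_upwards [hν] with t ht
      rw [← mul_assoc, mul_assoc (k t), ← ENNReal.rpow_add _ _ (enorm_ne_zero.2 ht) enorm_ne_top,
        neg_add_cancel, ENNReal.rpow_zero, mul_one]
    rw [lintegral_congr_ae hweight]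
    exact rpow_lintegral_mul_le hp (by fun_prop) (by fun_prop)
  have hscale : ∀ᵐ t ∂ν, ∫⁻ x, w t * (‖t‖ₑ ^ (finrank ℝ E / p) * g (t • x)) ^ p ∂μ =
      w t * ∫⁻ x, g x ^ p ∂μ := by
    filter_upwards [hν] with t ht
    have : Measurable fun x : E ↦ g (t • x) := hgsmul.comp measurable_prodMk_left
    rw [lintegral_const_mul _ (by fun_prop), lintegral_rpow_enorm_rpow_mul_comp_smul μ hp₀ g ht]
  calc ∫⁻ x, (∫⁻ t, k t * g (t • x) ∂ν) ^ p ∂μ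
      ≤ ∫⁻ x, (∫⁻ t, w t ∂ν) ^ (p - 1) *
          ∫⁻ t, w t * (‖t‖ₑ ^ (finrank ℝ E / p) * g (t • x)) ^ p ∂ν ∂μ := lintegral_mono hjensen
    _ = (∫⁻ t, w t ∂ν) ^ (p - 1) *
          ∫⁻ t, ∫⁻ x, w t * (‖t‖ₑ ^ (finrank ℝ E / p) * g (t • x)) ^ p ∂μ ∂ν := by
        rw [lintegral_const_mul _ (by fun_prop), lintegral_lintegral_swap (by fun_prop)]
    _ = (∫⁻ t, w t ∂ν) ^ (p - 1) * ((∫⁻ t, w t ∂ν) * ∫⁻ x, g x ^ p ∂μ) := by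
        rw [lintegral_congr_ae hscale, lintegral_mul_const _ hw]
    _ = (∫⁻ t, w t ∂ν) ^ p * ∫⁻ x, g x ^ p ∂μ := by
        nth_rw 2 [← ENNReal.rpow_one (∫⁻ t, w t ∂ν)]
        rw [← mul_assoc, ← ENNReal.rpow_add_of_nonneg _ _ (sub_nonneg.2 hp) zero_le_one,
          sub_add_cancel]

theorem lintegral_Ioi_one_enorm_rpow {s : ℝ} (hs : 0 < s) :
    ∫⁻ t in Set.Ioi (1 : ℝ), ‖t‖ₑ ^ (-1 - s) = ENNReal.ofReal s⁻¹ := by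
  have hexp : -1 - s < -1 := by linarith
  calc ∫⁻ t in Set.Ioi (1 : ℝ), ‖t‖ₑ ^ (-1 - s)
      = ∫⁻ t in Set.Ioi (1 : ℝ), ENNReal.ofReal (t ^ (-1 - s)) := by
        refine setLIntegral_congr_fun measurableSet_Ioi fun t ht ↦ ?_
        have ht₀ : 0 < t := one_pos.trans ht
        simp only [Real.enorm_of_nonneg ht₀.le, ENNReal.ofReal_rpow_of_pos ht₀]
    _ = ENNReal.ofReal (∫ t in Set.Ioi (1 : ℝ), t ^ (-1 - s)) := by
        refine (ofReal_integral_eq_lintegral_ofReal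
          (integrableOn_Ioi_rpow_of_lt hexp one_pos) ?_).symm
        filter_upwards [ae_restrict_mem measurableSet_Ioi] with t ht
        exact Real.rpow_nonneg (one_pos.trans ht).le _
    _ = ENNReal.ofReal s⁻¹ := by
        rw [integral_Ioi_rpow_of_lt hexp one_pos, Real.one_rpow]
        ring_nf

theorem lintegral_rpow_lintegral_Ioi_one_comp_smul_le {p b : ℝ} (hp : 1 ≤ p)
    (hb : 0 < b + finrank ℝ E / p) {g : E → ℝ≥0∞} (hg : Measurable g) :
    ∫⁻ x, (∫⁻ t in Set.Ioi (1 : ℝ), ‖t‖ₑ ^ (-1 - b) * g (t • x)) ^ p ∂μ ≤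
      ENNReal.ofReal (b + finrank ℝ E / p)⁻¹ ^ p * ∫⁻ x, g x ^ p ∂μ := by
  have hne : ∀ᵐ t : ℝ ∂volume.restrict (Set.Ioi 1), t ≠ 0 := by
    filter_upwards [ae_restrict_mem measurableSet_Ioi] with t ht using (one_pos.trans ht).ne'
  refine (lintegral_rpow_lintegral_mul_comp_smul_le μ hp hne (by fun_prop) hg).trans_eq ?_
  rw [← lintegral_Ioi_one_enorm_rpow hb]
  congr 2
  refine lintegral_congr_ae ?_
  filter_upwards [hne] with t ht
  rw [← ENNReal.rpow_add _ _ (enorm_ne_zero.2 ht) enorm_ne_top]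
  ring_nf

end HomogeneousKernel

section RadialDerivative

variable {E F : Type*} [NormedAddCommGroup E] [NormedSpace ℝ E] [NormedAddCommGroup F]
  [NormedSpace ℝ F]

theorem enorm_le_lintegral_Ioi_deriv {f : ℝ → F} (hf : ContDiff ℝ 1 f) (hsupp : HasCompactSupport f)
    (x : ℝ) : ‖f x‖ₑ ≤ ∫⁻ t in Set.Ioi x, ‖deriv f t‖ₑ := by
  calc ‖f x‖ₑ
      ≤ ∫⁻ t in Set.Iic (-x), ‖deriv (fun s ↦ f (-s)) t‖ₑ := by
        simpa [Function.comp_def] using HasCompactSupport.enorm_le_lintegral_Ici_deriv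
          (hf.comp contDiff_neg) (hsupp.comp_homeomorph (Homeomorph.neg ℝ)) (-x)
    _ = ∫⁻ t in Neg.neg ⁻¹' Set.Ici x, ‖deriv f (-t)‖ₑ := by
        simp [deriv_comp_neg]
    _ = ∫⁻ t in Set.Ioi x, ‖deriv f t‖ₑ := by
        rw [(Measure.measurePreserving_neg volume).setLIntegral_comp_preimage_emb
          (MeasurableEquiv.neg ℝ).measurableEmbedding (fun t ↦ ‖deriv f t‖ₑ),
          setLIntegral_congr Ioi_ae_eq_Ici]

theorem enorm_le_lintegral_Ioi_one_fderiv {φ : E → F} (hφ : ContDiff ℝ 1 φ)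
    (hsupp : HasCompactSupport φ) {x : E} (hx : x ≠ 0) :
    ‖φ x‖ₑ ≤ ∫⁻ t in Set.Ioi (1 : ℝ), ‖fderiv ℝ φ (t • x) x‖ₑ := by
  have hderiv (t : ℝ) : deriv (fun s : ℝ ↦ φ (s • x)) t = fderiv ℝ φ (t • x) x := by
    have hline : HasDerivAt (fun s : ℝ ↦ s • x) x t := by simpa using (hasDerivAt_id t).smul_const x
    exact ((hφ.differentiable one_ne_zero (t • x)).hasFDerivAt.comp_hasDerivAt t hline).deriv
  have hray : ContDiff ℝ 1 fun s : ℝ ↦ φ (s • x) := hφ.comp (contDiff_id.smul contDiff_const)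
  simpa only [one_smul, hderiv] using enorm_le_lintegral_Ioi_deriv hray
    (hsupp.comp_isClosedEmbedding (isClosedEmbedding_smul_left hx)) 1

theorem enorm_rpow_mul_enorm_le_lintegral_Ioi_one {φ : E → F} (hφ : ContDiff ℝ 1 φ)
    (hsupp : HasCompactSupport φ) (b : ℝ) {x : E} (hx : x ≠ 0) :
    ‖x‖ₑ ^ b * ‖φ x‖ₑ ≤ ∫⁻ t in Set.Ioi (1 : ℝ), ‖t‖ₑ ^ (-1 - b) *
      (‖t • x‖ₑ ^ b * ‖fderiv ℝ φ (t • x) (t • x)‖ₑ) := by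
  have hx₀ : ‖x‖ₑ ≠ 0 := enorm_ne_zero.2 hx
  have hintegrand (t : ℝ) (ht : t ∈ Set.Ioi 1) : ‖x‖ₑ ^ b * ‖fderiv ℝ φ (t • x) x‖ₑ =
      ‖t‖ₑ ^ (-1 - b) * (‖t • x‖ₑ ^ b * ‖fderiv ℝ φ (t • x) (t • x)‖ₑ) := by
    have ht₀ : ‖t‖ₑ ≠ 0 := enorm_ne_zero.2 (one_pos.trans ht).ne'
    have hcancel : ‖t‖ₑ ^ (-1 - b) * (‖t‖ₑ ^ b * ‖t‖ₑ) = 1 := by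
      rw [← mul_assoc, ← ENNReal.rpow_add _ _ ht₀ enorm_ne_top, sub_add_cancel,
        ENNReal.rpow_neg_one, ENNReal.inv_mul_cancel ht₀ enorm_ne_top]
    rw [map_smul, enorm_smul, enorm_smul, ENNReal.mul_rpow_of_ne_zero ht₀ hx₀,
      mul_mul_mul_comm (_ ^ b), ← mul_assoc, hcancel, one_mul]
  calc ‖x‖ₑ ^ b * ‖φ x‖ₑ
      ≤ ‖x‖ₑ ^ b * ∫⁻ t in Set.Ioi (1 : ℝ), ‖fderiv ℝ φ (t • x) x‖ₑ := by
        gcongr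
        exact enorm_le_lintegral_Ioi_one_fderiv hφ hsupp hx
    _ = ∫⁻ t in Set.Ioi (1 : ℝ), ‖x‖ₑ ^ b * ‖fderiv ℝ φ (t • x) x‖ₑ :=
        (lintegral_const_mul' _ _ (ENNReal.rpow_ne_top_of_ne_zero hx₀ enorm_ne_top)).symm
    _ = _ := setLIntegral_congr_fun measurableSet_Ioi hintegrand

end RadialDerivative

section Hardy

theorem ofReal_norm_rpow_mul_norm_rpow {E F : Type*} [NormedAddCommGroup E]
    [SeminormedAddCommGroup F] {p : ℝ} (hp : 0 ≤ p) (b : ℝ) {x : E} (hx : x ≠ 0) (y : F) :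
    ENNReal.ofReal (‖x‖ ^ (b * p) * ‖y‖ ^ p) = (‖x‖ₑ ^ b * ‖y‖ₑ) ^ p := by
  rw [ENNReal.ofReal_mul (by positivity), ← ENNReal.ofReal_rpow_of_pos (norm_pos_iff.2 hx),
    ← ENNReal.ofReal_rpow_of_nonneg (norm_nonneg y) hp, ofReal_norm, ofReal_norm,
    ENNReal.mul_rpow_of_nonneg _ _ hp, ENNReal.rpow_mul]

variable {E F : Type*} [NormedAddCommGroup E] [NormedSpace ℝ E] [FiniteDimensional ℝ E]
  [Nontrivial E] [MeasurableSpace E] [BorelSpace E] [NormedAddCommGroup F] [NormedSpace ℝ F]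
  (μ : Measure E) [μ.IsAddHaarMeasure]

theorem lintegral_enorm_rpow_mul_enorm_rpow_le_fderiv_self {p b : ℝ} (hp : 1 ≤ p)
    (hb : 0 < b + finrank ℝ E / p) {φ : E → F} (hφ : ContDiff ℝ 1 φ)
    (hsupp : HasCompactSupport φ) :
    ∫⁻ x, (‖x‖ₑ ^ b * ‖φ x‖ₑ) ^ p ∂μ ≤
      ENNReal.ofReal (b + finrank ℝ E / p)⁻¹ ^ p *
        ∫⁻ x, (‖x‖ₑ ^ b * ‖fderiv ℝ φ x x‖ₑ) ^ p ∂μ := by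
  have hmeas : Measurable fun x ↦ ‖x‖ₑ ^ b * ‖fderiv ℝ φ x x‖ₑ :=
    (measurable_enorm.pow_const b).mul
      ((hφ.continuous_fderiv one_ne_zero).clm_apply continuous_id).enorm.measurable
  refine le_trans (lintegral_mono_ae ?_)
    (lintegral_rpow_lintegral_Ioi_one_comp_smul_le μ hp hb hmeas)
  filter_upwards [μ.ae_ne 0] with x hx
  gcongr
  exact enorm_rpow_mul_enorm_le_lintegral_Ioi_one hφ hsupp b hx

theorem generalized_hardy_inequality_general {p a : ℝ} (hp : 1 ≤ p) (ha : 0 < a + finrank ℝ E)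
    {φ : E → F} (hφ : ContDiff ℝ 1 φ) (hsupp : HasCompactSupport φ) :
    (∫⁻ x, ENNReal.ofReal (‖x‖ ^ a * ‖φ x‖ ^ p) ∂μ) ^ (1 / p) ≤
      ENNReal.ofReal (p / (a + finrank ℝ E)) *
        (∫⁻ x, ENNReal.ofReal (‖x‖ ^ (a + p) * ‖fderiv ℝ φ x (‖x‖⁻¹ • x)‖ ^ p) ∂μ) ^ (1 / p) := by
  have hp₀ : 0 < p := by linarith
  have hconst : a / p + finrank ℝ E / p = (a + finrank ℝ E) / p := (add_div ..).symm
  have hleft : ∀ᵐ x ∂μ, ENNReal.ofReal (‖x‖ ^ a * ‖φ x‖ ^ p) =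
      (‖x‖ₑ ^ (a / p) * ‖φ x‖ₑ) ^ p := by
    filter_upwards [μ.ae_ne 0] with x hx
    rw [← ofReal_norm_rpow_mul_norm_rpow hp₀.le _ hx, div_mul_cancel₀ _ hp₀.ne']
  have hright : ∀ᵐ x ∂μ,
      ENNReal.ofReal (‖x‖ ^ (a + p) * ‖fderiv ℝ φ x (‖x‖⁻¹ • x)‖ ^ p) =
        (‖x‖ₑ ^ (a / p) * ‖fderiv ℝ φ x x‖ₑ) ^ p := by
    filter_upwards [μ.ae_ne 0] with x hx
    have hx₀ : 0 < ‖x‖ := norm_pos_iff.2 hx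
    rw [← ofReal_norm_rpow_mul_norm_rpow hp₀.le _ hx, div_mul_cancel₀ _ hp₀.ne',
      Real.rpow_add hx₀, mul_assoc, ← Real.mul_rpow hx₀.le (norm_nonneg _), map_smul, norm_smul,
      norm_inv, norm_norm, mul_inv_cancel_left₀ hx₀.ne']
  rw [lintegral_congr_ae hleft, lintegral_congr_ae hright, one_div,
    ENNReal.rpow_inv_le_iff hp₀, ENNReal.mul_rpow_of_nonneg _ _ hp₀.le,
    ENNReal.rpow_inv_rpow hp₀.ne', ← inv_div (a + _) p, ← hconst]
  exact lintegral_enorm_rpow_mul_enorm_rpow_le_fderiv_self μ hp (hconst ▸ div_pos ha hp₀) hφ hsupp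

end Hardy

theorem radialDeriv_eq_fderiv (φ : E3 → ℂ) (x : E3) :
    radialDeriv φ x = fderiv ℝ φ x (‖x‖⁻¹ • x) := by
  have hcoord : ‖x‖⁻¹ • x = ∑ j, (x j / ‖x‖) • e3 j := by
    ext i
    simp [e3, Pi.single_apply, div_eq_inv_mul]
  simp only [hcoord, map_sum, map_smul, Complex.real_smul, radialDeriv]

/-- generalized Hardy inequality with the radial derivative. -/
theorem generalized_hardy_inequality (σ : ℝ) (hσ : -1 < σ)
    (φ : E3 → ℂ) (hsm : ContDiff ℝ (⊤ : ℕ∞) φ) (hsupp : HasCompactSupport φ) :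
    (∫⁻ x : E3, ENNReal.ofReal (‖x‖ ^ (2*σ - 1) * Complex.normSq (φ x))) ^ (1/2 : ℝ) ≤
      ENNReal.ofReal (2 / (σ + 1)) *
        (∫⁻ x : E3, ENNReal.ofReal (‖x‖ ^ (2*σ + 1) *
          Complex.normSq (radialDeriv φ x))) ^ (1/2 : ℝ) := by
  have hdim : 2 * σ - 1 + (finrank ℝ E3 : ℝ) = 2 * (σ + 1) := by
    rw [finrank_euclideanSpace_fin]
    push_cast
    ring
  have hpos : 0 < 2 * σ - 1 + (finrank ℝ E3 : ℝ) := by linarith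
  have hconst : 2 / (2 * σ - 1 + (finrank ℝ E3 : ℝ)) ≤ 2 / (σ + 1) := by
    rw [hdim]
    gcongr <;> linarith
  have hexp : 2 * σ + 1 = 2 * σ - 1 + 2 := by ring
  simp only [Complex.normSq_eq_norm_sq, radialDeriv_eq_fderiv, ← Real.rpow_two, hexp]
  refine (generalized_hardy_inequality_general volume one_le_two hpos (hsm.of_le (by simp))
    hsupp).trans ?_
  gcongr
end
end

section
/- Stein–Weiss estimate for the Newtonian potential: for every s with 1/2 < s < 3/2 there is a constant C_s such that for every measurable f : ℝ³ → [0,∞], the function u(x) := ∫_{ℝ³} f(y)/|x−y| dy satisfies ( ∫_{ℝ³} |x|^{2(s−2)} u(x)² dx )^{1/2} ≤ C_s ( ∫_{ℝ³} |x|^{2s} f(x)² dx )^{1/2} (both sides possibly infinite). -/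
open MeasureTheory
open scoped ENNReal

noncomputable section

/-!
Write `n` for the dimension and conjugate the Riesz kernel by the weights, so that the claim becomes
the boundedness on `L^p` of the integral operator with kernel
`‖x‖ ^ (s - d) * ‖x - y‖ ^ (d - n) * ‖y‖ ^ (-s)`. This kernel is homogeneous of degree `-n`, hence
powers of the norm are natural test functions for Schur's test, and `‖x‖ ^ (-n / (p * q))` works for
all admissible `s` at once.

The test integrals reduce to `∫ ‖y‖ ^ α * ‖x - y‖ ^ β`. The larger of `‖y‖` and `‖x - y‖` is at
least a third of the sum of `‖x‖` and the smaller one, which bounds the integrand by two functions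
radial about `0` and about `x`; rescaling by `‖x‖` leaves integrals of `‖y‖ ^ a * (1 + ‖y‖) ^ b`,
finite by the conditions on the exponents at the origin and at infinity.
-/

section SchurTest

variable {X Y : Type*} [MeasurableSpace X] [MeasurableSpace Y] {μ : Measure X} {ν : Measure Y}
  {p q : ℝ}

lemma rpow_lintegral_le_mul_lintegral_div_rpow (hpq : p.HolderConjugate q) {f g : Y → ℝ≥0∞}
    (hf : AEMeasurable f ν) (hg : AEMeasurable g ν)
    (hg_zero : ∀ᵐ y ∂ν, g y ≠ 0) (hg_top : ∀ᵐ y ∂ν, g y ≠ ∞) :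
    (∫⁻ y, f y ∂ν) ^ p ≤ (∫⁻ y, g y ^ q ∂ν) ^ (p / q) * ∫⁻ y, (f y / g y) ^ p ∂ν := by
  have holder : ∫⁻ y, f y ∂ν ≤
      (∫⁻ y, g y ^ q ∂ν) ^ (1 / q) * (∫⁻ y, (f y / g y) ^ p ∂ν) ^ (1 / p) := by
    refine (lintegral_congr_ae ?_).trans_le
      (ENNReal.lintegral_mul_le_Lp_mul_Lq ν hpq.symm hg (hf.div hg))
    filter_upwards [hg_zero, hg_top] with y h_zero h_top
    exact (ENNReal.mul_div_cancel h_zero h_top).symm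
  calc (∫⁻ y, f y ∂ν) ^ p
      ≤ ((∫⁻ y, g y ^ q ∂ν) ^ (1 / q) * (∫⁻ y, (f y / g y) ^ p ∂ν) ^ (1 / p)) ^ p :=
        ENNReal.rpow_le_rpow holder hpq.nonneg
    _ = (∫⁻ y, g y ^ q ∂ν) ^ (p / q) * ∫⁻ y, (f y / g y) ^ p ∂ν := by
        rw [ENNReal.mul_rpow_of_nonneg _ _ hpq.nonneg, ← ENNReal.rpow_mul, ← ENNReal.rpow_mul,
          one_div_mul_cancel hpq.ne_zero, ENNReal.rpow_one, one_div_mul_eq_div]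

lemma rpow_lintegral_mul_le_mul_lintegral_mul_div_rpow (hpq : p.HolderConjugate q)
    {k f g : Y → ℝ≥0∞} (hk : AEMeasurable k ν) (hf : AEMeasurable f ν) (hg : AEMeasurable g ν)
    (hg_zero : ∀ᵐ y ∂ν, g y ≠ 0) (hg_top : ∀ᵐ y ∂ν, g y ≠ ∞) :
    (∫⁻ y, k y * f y ∂ν) ^ p ≤
      (∫⁻ y, k y * g y ^ q ∂ν) ^ (p / q) * ∫⁻ y, k y * (f y / g y) ^ p ∂ν := by
  have hac := withDensity_absolutelyContinuous ν k
  have weighted := rpow_lintegral_le_mul_lintegral_div_rpow hpq (hf.mono_ac hac) (hg.mono_ac hac)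
    (hac.ae_le hg_zero) (hac.ae_le hg_top)
  rwa [lintegral_withDensity_eq_lintegral_mul₀ hk hf,
    lintegral_withDensity_eq_lintegral_mul₀ hk (hg.pow_const q),
    lintegral_withDensity_eq_lintegral_mul₀ hk
      (g := fun y => (f y / g y) ^ p) ((hf.div hg).pow_const p)] at weighted

lemma rpow_lintegral_mul_le_of_lintegral_mul_rpow_le (hpq : p.HolderConjugate q)
    {k f g : Y → ℝ≥0∞} (hk : AEMeasurable k ν) (hf : AEMeasurable f ν) (hg : AEMeasurable g ν)
    (hg_zero : ∀ᵐ y ∂ν, g y ≠ 0) (hg_top : ∀ᵐ y ∂ν, g y ≠ ∞) {a b : ℝ≥0∞}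
    (hkg : ∫⁻ y, k y * g y ^ q ∂ν ≤ a * b ^ q) :
    (∫⁻ y, k y * f y ∂ν) ^ p ≤ a ^ (p / q) * ∫⁻ y, b ^ p * (k y * (f y / g y) ^ p) ∂ν := by
  have hpq_nonneg : 0 ≤ p / q := div_nonneg hpq.nonneg hpq.symm.nonneg
  calc (∫⁻ y, k y * f y ∂ν) ^ p
      ≤ (∫⁻ y, k y * g y ^ q ∂ν) ^ (p / q) * ∫⁻ y, k y * (f y / g y) ^ p ∂ν :=
        rpow_lintegral_mul_le_mul_lintegral_mul_div_rpow hpq hk hf hg hg_zero hg_top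
    _ ≤ (a * b ^ q) ^ (p / q) * ∫⁻ y, k y * (f y / g y) ^ p ∂ν := by gcongr
    _ = a ^ (p / q) * ∫⁻ y, b ^ p * (k y * (f y / g y) ^ p) ∂ν := by
        rw [ENNReal.mul_rpow_of_nonneg _ _ hpq_nonneg, ← ENNReal.rpow_mul,
          mul_div_cancel₀ _ hpq.symm.ne_zero, lintegral_const_mul'' _ (by fun_prop), mul_assoc]

theorem lintegral_rpow_lintegral_mul_le_of_schur_test [SFinite μ] [SFinite ν]
    (hpq : p.HolderConjugate q) {K : X → Y → ℝ≥0∞} (hK : Measurable (Function.uncurry K))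
    {h : X → ℝ≥0∞} {g : Y → ℝ≥0∞} (hh : Measurable h) (hg : Measurable g)
    (hg_zero : ∀ᵐ y ∂ν, g y ≠ 0) (hg_top : ∀ᵐ y ∂ν, g y ≠ ∞) {A B : ℝ≥0∞}
    (hA : ∀ᵐ x ∂μ, ∫⁻ y, K x y * g y ^ q ∂ν ≤ A * h x ^ q)
    (hB : ∀ᵐ y ∂ν, ∫⁻ x, K x y * h x ^ p ∂μ ≤ B * g y ^ p)
    {f : Y → ℝ≥0∞} (hf : AEMeasurable f ν) :
    ∫⁻ x, (∫⁻ y, K x y * f y ∂ν) ^ p ∂μ ≤ A ^ (p / q) * B * ∫⁻ y, f y ^ p ∂ν := by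
  have : AEMeasurable (fun z : X × Y => f z.2) (μ.prod ν) := hf.comp_snd
  have hF : AEMeasurable (fun z : X × Y => h z.1 ^ p * (K z.1 z.2 * (f z.2 / g z.2) ^ p))
      (μ.prod ν) := by fun_prop
  calc ∫⁻ x, (∫⁻ y, K x y * f y ∂ν) ^ p ∂μ
      ≤ ∫⁻ x, A ^ (p / q) * ∫⁻ y, h x ^ p * (K x y * (f y / g y) ^ p) ∂ν ∂μ := by
        refine lintegral_mono_ae ?_
        filter_upwards [hA] with x hAx
        exact rpow_lintegral_mul_le_of_lintegral_mul_rpow_le hpq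
          (Measurable.of_uncurry_left hK).aemeasurable hf hg.aemeasurable hg_zero hg_top hAx
    _ = A ^ (p / q) * ∫⁻ y, ∫⁻ x, h x ^ p * (K x y * (f y / g y) ^ p) ∂μ ∂ν := by
        rw [lintegral_const_mul'' _ hF.lintegral_prod_right', lintegral_lintegral_swap hF]
    _ ≤ A ^ (p / q) * ∫⁻ y, B * f y ^ p ∂ν := by
        refine mul_le_mul_right (lintegral_mono_ae ?_) _
        filter_upwards [hB, hg_zero, hg_top] with y hBy h_zero h_top
        have hKy : Measurable fun x => K x y := hK.of_uncurry_right
        calc ∫⁻ x, h x ^ p * (K x y * (f y / g y) ^ p) ∂μ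
            = (f y / g y) ^ p * ∫⁻ x, K x y * h x ^ p ∂μ := by
              rw [← lintegral_const_mul _ (by fun_prop)]
              exact lintegral_congr fun x => by ring
          _ ≤ (f y / g y) ^ p * (B * g y ^ p) := by gcongr
          _ = B * (f y / g y * g y) ^ p := by
              rw [ENNReal.mul_rpow_of_nonneg _ _ hpq.nonneg]; ring
          _ = B * f y ^ p := by rw [ENNReal.div_mul_cancel h_zero h_top]
    _ = A ^ (p / q) * B * ∫⁻ y, f y ^ p ∂ν := by
        rw [lintegral_const_mul'' _ (by fun_prop), mul_assoc]

end SchurTest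

section PowerWeights

open Metric Module

lemma ennreal_rpow_le_mul_rpow_of_nonpos {c s t : ℝ≥0∞} {γ : ℝ} (hγ : γ ≤ 0) (hc_zero : c ≠ 0)
    (hc_top : c ≠ ∞) (h : s ≤ c * t) : t ^ γ ≤ c ^ (-γ) * s ^ γ := by
  have hγ' : 0 ≤ -γ := neg_nonneg.2 hγ
  have hpow : s ^ (-γ) ≤ c ^ (-γ) * t ^ (-γ) :=
    (ENNReal.rpow_le_rpow h hγ').trans_eq (ENNReal.mul_rpow_of_nonneg _ _ hγ')
  have hc_pow_zero : c ^ (-γ) ≠ 0 := by simp [hc_zero, hc_top]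
  have hc_pow_top : c ^ (-γ) ≠ ∞ := ENNReal.rpow_ne_top_of_nonneg hγ' hc_top
  rw [← ENNReal.inv_le_inv, ENNReal.mul_inv (.inl hc_pow_zero) (.inl hc_pow_top),
    ENNReal.inv_mul_le_iff hc_pow_zero hc_pow_top] at hpow
  simpa only [← ENNReal.rpow_neg, neg_neg] using hpow

variable {E : Type*} [NormedAddCommGroup E] {α β : ℝ}

lemma enorm_rpow_mul_enorm_sub_rpow_le (hα : α ≤ 0) (hβ : β ≤ 0) (x y : E) :
    ‖y‖ₑ ^ α * ‖x - y‖ₑ ^ β ≤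
      3 ^ (-β) * (‖y‖ₑ ^ α * (‖x‖ₑ + ‖y‖ₑ) ^ β) +
        3 ^ (-α) * (‖x - y‖ₑ ^ β * (‖x‖ₑ + ‖x - y‖ₑ) ^ α) := by
  have hx : ‖x‖ₑ ≤ ‖y‖ₑ + ‖x - y‖ₑ := by simpa using enorm_add_le y (x - y)
  rcases le_total ‖y‖ₑ ‖x - y‖ₑ with h | h
  · have h3 : ‖x‖ₑ + ‖y‖ₑ ≤ 3 * ‖x - y‖ₑ := by
      calc ‖x‖ₑ + ‖y‖ₑ ≤ ‖x - y‖ₑ + ‖x - y‖ₑ + ‖x - y‖ₑ := by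
            gcongr; exact hx.trans (by gcongr)
        _ = 3 * ‖x - y‖ₑ := by ring
    refine le_add_right ?_
    grw [ennreal_rpow_le_mul_rpow_of_nonpos hβ three_ne_zero ENNReal.ofNat_ne_top h3, mul_left_comm]
  · have h3 : ‖x‖ₑ + ‖x - y‖ₑ ≤ 3 * ‖y‖ₑ := by
      calc ‖x‖ₑ + ‖x - y‖ₑ ≤ ‖y‖ₑ + ‖y‖ₑ + ‖y‖ₑ := by
            gcongr; exact hx.trans (by gcongr)
        _ = 3 * ‖y‖ₑ := by ring
    refine le_add_left ?_
    grw [ennreal_rpow_le_mul_rpow_of_nonpos hα three_ne_zero ENNReal.ofNat_ne_top h3, mul_assoc,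
      mul_comm (_ ^ α)]

lemma enorm_norm_rpow_of_ne_zero {x : E} (hx : x ≠ 0) (γ : ℝ) :
    ‖‖x‖ ^ γ‖ₑ = ‖x‖ₑ ^ γ := by
  rw [Real.enorm_of_nonneg (by positivity), ← ENNReal.ofReal_rpow_of_pos (norm_pos_iff.2 hx),
    ofReal_norm]

lemma lintegral_ofReal_norm_rpow_mul_rpow [MeasurableSpace E] {μ : Measure E}
    [NullSingletonClass μ] {p : ℝ} (hp : 0 ≤ p) (γ : ℝ) (f : E → ℝ≥0∞) :
    ∫⁻ x, ENNReal.ofReal (‖x‖ ^ (p * γ)) * f x ^ p ∂μ = ∫⁻ x, (‖x‖ₑ ^ γ * f x) ^ p ∂μ := by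
  refine lintegral_congr_ae ?_
  filter_upwards [Measure.ae_ne μ 0] with x hx
  rw [← ENNReal.ofReal_rpow_of_pos (norm_pos_iff.2 hx), ofReal_norm, mul_comm p, ENNReal.rpow_mul,
    ENNReal.mul_rpow_of_nonneg _ _ hp]

variable [NormedSpace ℝ E]

lemma nontrivial_of_finrank_cast_pos (h : (0 : ℝ) < finrank ℝ E) : Nontrivial E :=
  nontrivial_of_finrank_pos (R := ℝ) (by exact_mod_cast h)

variable [FiniteDimensional ℝ E] [MeasurableSpace E] [BorelSpace E] {μ : Measure E}
  [μ.IsAddHaarMeasure]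

lemma lintegral_eq_enorm_rpow_finrank_mul_lintegral_comp_smul (f : E → ℝ≥0∞) {t : ℝ} (ht : t ≠ 0) :
    ∫⁻ y, f y ∂μ = ‖t‖ₑ ^ (finrank ℝ E : ℝ) * ∫⁻ y, f (t • y) ∂μ := by
  rw [← (measurableEmbedding_const_smul₀ ht).lintegral_map, Measure.map_addHaar_smul μ ht,
    lintegral_smul_measure, smul_eq_mul, ← mul_assoc, ENNReal.rpow_natCast, ← enorm_pow,
    ← Real.enorm_eq_ofReal_abs, ← enorm_mul, mul_inv_cancel₀ (pow_ne_zero _ ht)]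
  simp

lemma integrable_norm_rpow_mul_one_add_norm_rpow (hα₀ : α ≤ 0) (hα : -finrank ℝ E < α)
    (hαβ : α + β < -finrank ℝ E) :
    Integrable (fun y : E => ‖y‖ ^ α * (1 + ‖y‖) ^ β) μ := by
  have hβ : β ≤ 0 := by linarith
  have hmeas : AEStronglyMeasurable (fun y : E => ‖y‖ ^ α * (1 + ‖y‖) ^ β) μ := by fun_prop
  have near : IntegrableOn (fun y : E => ‖y‖ ^ α * (1 + ‖y‖) ^ β) (ball 0 1) μ := by
    have hdim : 1 ≤ finrank ℝ E := by exact_mod_cast (by linarith : (0 : ℝ) < finrank ℝ E)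
    refine integrableOn_ball_of_norm_le_rpow (C := 1) (α := -α) hdim (by linarith)
      (.of_forall fun y => ?_) hmeas
    rw [Real.norm_of_nonneg (by positivity), neg_neg, one_mul]
    exact mul_le_of_le_one_right (by positivity)
      (Real.rpow_le_one_of_one_le_of_nonpos (by linarith [norm_nonneg y]) hβ)
  have far : IntegrableOn (fun y : E => ‖y‖ ^ α * (1 + ‖y‖) ^ β) (ball 0 1)ᶜ μ := by
    have dominant : Integrable (fun y : E => 2⁻¹ ^ α * (1 + ‖y‖) ^ (α + β)) μ := by
      simpa using (integrable_one_add_norm (r := -(α + β)) (by linarith)).const_mul _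
    refine dominant.integrableOn.mono' hmeas.restrict
      ((ae_restrict_iff' measurableSet_ball.compl).2 (.of_forall fun y hy => ?_))
    have hy : 1 ≤ ‖y‖ := by simpa using hy
    calc ‖‖y‖ ^ α * (1 + ‖y‖) ^ β‖ = ‖y‖ ^ α * (1 + ‖y‖) ^ β :=
          Real.norm_of_nonneg (by positivity)
      _ ≤ (2⁻¹ * (1 + ‖y‖)) ^ α * (1 + ‖y‖) ^ β := by
          gcongr ?_ * _
          exact Real.rpow_le_rpow_of_nonpos (by positivity) (by linarith) hα₀
      _ = 2⁻¹ ^ α * (1 + ‖y‖) ^ (α + β) := by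
          rw [Real.mul_rpow (by positivity) (by positivity), Real.rpow_add (by positivity),
            mul_assoc]
  simpa using near.union far

lemma lintegral_enorm_rpow_mul_one_add_enorm_rpow_ne_top
    (hα₀ : α ≤ 0) (hα : -finrank ℝ E < α) (hαβ : α + β < -finrank ℝ E) :
    ∫⁻ y : E, ‖y‖ₑ ^ α * (1 + ‖y‖ₑ) ^ β ∂μ ≠ ∞ := by
  have hfin := (integrable_norm_rpow_mul_one_add_norm_rpow (μ := μ) hα₀ hα hαβ).2
  have : Nontrivial E := nontrivial_of_finrank_cast_pos (by linarith)
  refine ((lintegral_congr_ae ?_).trans_lt hfin).ne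
  filter_upwards [Measure.ae_ne μ 0] with y hy
  rw [enorm_mul, enorm_norm_rpow_of_ne_zero hy, Real.enorm_of_nonneg (by positivity),
    ← ENNReal.ofReal_rpow_of_pos (by positivity), ENNReal.ofReal_add zero_le_one (norm_nonneg y),
    ofReal_norm, ENNReal.ofReal_one]

lemma lintegral_enorm_rpow_mul_enorm_add_enorm_rpow {x : E} (hx : x ≠ 0) :
    ∫⁻ y : E, ‖y‖ₑ ^ α * (‖x‖ₑ + ‖y‖ₑ) ^ β ∂μ =
      ‖x‖ₑ ^ (finrank ℝ E + α + β) * ∫⁻ y : E, ‖y‖ₑ ^ α * (1 + ‖y‖ₑ) ^ β ∂μ := by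
  have hx_zero : ‖x‖ₑ ≠ 0 := enorm_ne_zero.2 hx
  have scaled (y : E) : ‖‖x‖ • y‖ₑ ^ α * (‖x‖ₑ + ‖‖x‖ • y‖ₑ) ^ β =
      ‖x‖ₑ ^ (α + β) * (‖y‖ₑ ^ α * (1 + ‖y‖ₑ) ^ β) := by
    rw [enorm_smul, enorm_norm, ← mul_one_add, ENNReal.mul_rpow_of_ne_top (by simp) (by simp),
      ENNReal.mul_rpow_of_ne_top (by simp) (by simp), ENNReal.rpow_add _ _ hx_zero enorm_ne_top]
    ring
  rw [lintegral_eq_enorm_rpow_finrank_mul_lintegral_comp_smul _ (norm_ne_zero_iff.2 hx), enorm_norm,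
    add_assoc, ENNReal.rpow_add _ _ hx_zero enorm_ne_top, mul_assoc]
  simp_rw [scaled]
  rw [lintegral_const_mul _ (by fun_prop)]

lemma exists_lintegral_enorm_rpow_mul_enorm_sub_rpow_le (hα : -finrank ℝ E < α)
    (hβ : -finrank ℝ E < β) (hαβ : α + β < -finrank ℝ E) :
    ∃ C : ℝ≥0∞, C ≠ ∞ ∧ ∀ x : E, x ≠ 0 →
      ∫⁻ y, ‖y‖ₑ ^ α * ‖x - y‖ₑ ^ β ∂μ ≤ C * ‖x‖ₑ ^ (finrank ℝ E + α + β) := by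
  have hα₀ : α ≤ 0 := by linarith
  have hβ₀ : β ≤ 0 := by linarith
  have hβα : β + α < -finrank ℝ E := by linarith
  set J : ℝ → ℝ → ℝ≥0∞ := fun a b => ∫⁻ y : E, ‖y‖ₑ ^ a * (1 + ‖y‖ₑ) ^ b ∂μ
  have hJ : J α β ≠ ∞ := lintegral_enorm_rpow_mul_one_add_enorm_rpow_ne_top hα₀ hα hαβ
  have hJ' : J β α ≠ ∞ := lintegral_enorm_rpow_mul_one_add_enorm_rpow_ne_top hβ₀ hβ hβα
  refine ⟨3 ^ (-β) * J α β + 3 ^ (-α) * J β α, by finiteness, fun x hx => ?_⟩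
  calc ∫⁻ y, ‖y‖ₑ ^ α * ‖x - y‖ₑ ^ β ∂μ
      ≤ ∫⁻ y, 3 ^ (-β) * (‖y‖ₑ ^ α * (‖x‖ₑ + ‖y‖ₑ) ^ β) +
        3 ^ (-α) * (‖x - y‖ₑ ^ β * (‖x‖ₑ + ‖x - y‖ₑ) ^ α) ∂μ :=
        lintegral_mono fun y => enorm_rpow_mul_enorm_sub_rpow_le hα₀ hβ₀ x y
    _ = 3 ^ (-β) * ∫⁻ y, ‖y‖ₑ ^ α * (‖x‖ₑ + ‖y‖ₑ) ^ β ∂μ +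
        3 ^ (-α) * ∫⁻ y, ‖y‖ₑ ^ β * (‖x‖ₑ + ‖y‖ₑ) ^ α ∂μ := by
        rw [lintegral_add_left (by fun_prop), lintegral_const_mul _ (by fun_prop),
          lintegral_const_mul _ (by fun_prop),
          lintegral_sub_left_eq_self (fun y => ‖y‖ₑ ^ β * (‖x‖ₑ + ‖y‖ₑ) ^ α)]
    _ = (3 ^ (-β) * J α β + 3 ^ (-α) * J β α) * ‖x‖ₑ ^ (finrank ℝ E + α + β) := by
        rw [lintegral_enorm_rpow_mul_enorm_add_enorm_rpow hx,
          lintegral_enorm_rpow_mul_enorm_add_enorm_rpow hx, add_right_comm _ β α]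
        ring

end PowerWeights

section RieszPotential

open Module

lemma div_add_div_eq_of_holderConjugate {p q : ℝ} (hpq : p.HolderConjugate q) (a : ℝ) :
    a / p + a / q = a := by
  rw [div_eq_mul_inv, div_eq_mul_inv, ← mul_add, hpq.inv_add_inv_eq_one, mul_one]

variable {E : Type*} [NormedAddCommGroup E] [NormedSpace ℝ E]

/-- The Riesz potential of order `d` of a nonnegative function, without the customary normalizing
constant. The Newtonian potential on `ℝ³` is the case `d = 2`. -/
def rieszPotential [MeasurableSpace E] (μ : Measure E) (d : ℝ) (f : E → ℝ≥0∞) (x : E) : ℝ≥0∞ :=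
  ∫⁻ y, ‖x - y‖ₑ ^ (d - finrank ℝ E) * f y ∂μ

lemma rieszPotential_two_euclideanSpace_fin_three (f : EuclideanSpace ℝ (Fin 3) → ℝ≥0∞)
    (x : EuclideanSpace ℝ (Fin 3)) :
    rieszPotential volume 2 f x = ∫⁻ y, f y / ENNReal.ofReal ‖x - y‖ := by
  have horder : (2 : ℝ) - (3 : ℕ) = -1 := by norm_num
  simp only [rieszPotential, finrank_euclideanSpace_fin, horder, ENNReal.rpow_neg_one,
    ofReal_norm, ENNReal.div_eq_inv_mul]

/-- The kernel of the Riesz potential of order `d`, conjugated by power weights so that weighted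
`L^p` bounds for the potential become unweighted ones. -/
def steinWeissKernel (d s : ℝ) (x y : E) : ℝ≥0∞ :=
  ‖x‖ₑ ^ (s - d) * ‖x - y‖ₑ ^ (d - finrank ℝ E) * ‖y‖ₑ ^ (-s)

lemma steinWeissKernel_swap (d s : ℝ) (x y : E) :
    steinWeissKernel d s x y = steinWeissKernel d (d - s) y x := by
  simp only [steinWeissKernel, enorm_sub_rev x y, sub_sub_cancel_left, neg_sub]
  ring

variable [MeasurableSpace E] [BorelSpace E] {μ : Measure E} {p q d s γ : ℝ}

lemma enorm_rpow_mul_rieszPotential [NullSingletonClass μ] {f : E → ℝ≥0∞}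
    (hf : AEMeasurable f μ) (x : E) :
    ‖x‖ₑ ^ (s - d) * rieszPotential μ d f x =
      ∫⁻ y, steinWeissKernel d s x y * (‖y‖ₑ ^ s * f y) ∂μ := by
  rw [rieszPotential, ← lintegral_const_mul'' _ (by fun_prop)]
  refine lintegral_congr_ae ?_
  filter_upwards [Measure.ae_ne μ 0] with y hy
  have cancel : ‖y‖ₑ ^ (-s) * ‖y‖ₑ ^ s = 1 := by
    rw [← ENNReal.rpow_add _ _ (enorm_ne_zero.2 hy) enorm_ne_top, neg_add_cancel, ENNReal.rpow_zero]
  calc ‖x‖ₑ ^ (s - d) * (‖x - y‖ₑ ^ (d - finrank ℝ E) * f y)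
      = ‖x‖ₑ ^ (s - d) * (‖x - y‖ₑ ^ (d - finrank ℝ E) * f y) * (‖y‖ₑ ^ (-s) * ‖y‖ₑ ^ s) := by
        rw [cancel, mul_one]
    _ = steinWeissKernel d s x y * (‖y‖ₑ ^ s * f y) := by rw [steinWeissKernel]; ring

variable [FiniteDimensional ℝ E]

lemma measurable_uncurry_steinWeissKernel :
    Measurable (Function.uncurry (steinWeissKernel (E := E) d s)) := by
  simp only [steinWeissKernel, Function.uncurry_def]
  fun_prop

variable [μ.IsAddHaarMeasure]

lemma exists_lintegral_steinWeissKernel_mul_enorm_rpow_le (hd : 0 < d)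
    (hγ : s - finrank ℝ E < γ) (hγ' : γ < s - d) :
    ∃ C : ℝ≥0∞, C ≠ ∞ ∧ ∀ x : E, x ≠ 0 →
      ∫⁻ y, steinWeissKernel d s x y * ‖y‖ₑ ^ γ ∂μ ≤ C * ‖x‖ₑ ^ γ := by
  obtain ⟨C, hC_top, hC⟩ := exists_lintegral_enorm_rpow_mul_enorm_sub_rpow_le (μ := μ)
    (α := -s + γ) (β := d - finrank ℝ E) (by linarith) (by linarith) (by linarith)
  refine ⟨C, hC_top, fun x hx => ?_⟩
  have hnontriv : Nontrivial E := ⟨x, 0, hx⟩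
  calc ∫⁻ y, steinWeissKernel d s x y * ‖y‖ₑ ^ γ ∂μ
      = ∫⁻ y, ‖x‖ₑ ^ (s - d) * (‖y‖ₑ ^ (-s + γ) * ‖x - y‖ₑ ^ (d - finrank ℝ E)) ∂μ := by
        refine lintegral_congr_ae ?_
        filter_upwards [Measure.ae_ne μ 0] with y hy
        rw [steinWeissKernel, ENNReal.rpow_add _ _ (enorm_ne_zero.2 hy) enorm_ne_top]
        ring
    _ = ‖x‖ₑ ^ (s - d) * ∫⁻ y, ‖y‖ₑ ^ (-s + γ) * ‖x - y‖ₑ ^ (d - finrank ℝ E) ∂μ :=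
        lintegral_const_mul _ (by fun_prop)
    _ ≤ ‖x‖ₑ ^ (s - d) *
        (C * ‖x‖ₑ ^ (finrank ℝ E + (-s + γ) + (d - finrank ℝ E))) := by gcongr; exact hC x hx
    _ = C * ‖x‖ₑ ^ γ := by
        rw [mul_left_comm, ← ENNReal.rpow_add _ _ (enorm_ne_zero.2 hx) enorm_ne_top]
        ring_nf

theorem exists_lintegral_rpow_rieszPotential_le (hpq : p.HolderConjugate q)
    (hd : 0 < d) (hds : d - s < finrank ℝ E / p) (hs : s < finrank ℝ E / q) :
    ∃ C : ℝ≥0∞, C ≠ ∞ ∧ ∀ f : E → ℝ≥0∞, AEMeasurable f μ →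
      ∫⁻ x, (‖x‖ₑ ^ (s - d) * rieszPotential μ d f x) ^ p ∂μ ≤
        C * ∫⁻ x, (‖x‖ₑ ^ s * f x) ^ p ∂μ := by
  set n : ℝ := (finrank ℝ E : ℝ)
  have hn : n / p + n / q = n := div_add_div_eq_of_holderConjugate hpq n
  have : Nontrivial E := nontrivial_of_finrank_cast_pos (by linarith)
  set γ : ℝ := -(n / (p * q))
  have hγp : γ * p = -(n / q) := by have := hpq.ne_zero; simp only [γ]; field_simp
  have hγq : γ * q = -(n / p) := by have := hpq.symm.ne_zero; simp only [γ]; field_simp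
  obtain ⟨A, hA_top, hA⟩ := exists_lintegral_steinWeissKernel_mul_enorm_rpow_le (μ := μ)
    (s := s) (γ := γ * q) hd (by linarith) (by linarith)
  obtain ⟨B, hB_top, hB⟩ := exists_lintegral_steinWeissKernel_mul_enorm_rpow_le (μ := μ)
    (s := d - s) (γ := γ * p) hd (by linarith) (by linarith)
  have hpq_nonneg : 0 ≤ p / q := div_nonneg hpq.nonneg hpq.symm.nonneg
  refine ⟨A ^ (p / q) * B, by finiteness, fun f hf => ?_⟩
  have ae_ne_zero : ∀ᵐ x ∂μ, x ≠ 0 := Measure.ae_ne μ 0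
  have hw : Measurable fun x : E => ‖x‖ₑ ^ γ := by fun_prop
  simp_rw [enorm_rpow_mul_rieszPotential hf]
  refine lintegral_rpow_lintegral_mul_le_of_schur_test hpq measurable_uncurry_steinWeissKernel hw hw
    ?_ ?_ ?_ ?_ (by fun_prop)
  · filter_upwards [ae_ne_zero] with y hy
    simp [hy]
  · filter_upwards [ae_ne_zero] with y hy
    simp [hy]
  · filter_upwards [ae_ne_zero] with x hx
    simpa only [← ENNReal.rpow_mul] using hA x hx
  · filter_upwards [ae_ne_zero] with y hy
    simpa only [← ENNReal.rpow_mul, steinWeissKernel_swap d s] using hB y hy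

theorem stein_weiss_newtonian_potential_general (hpq : p.HolderConjugate q)
    (hd : 0 < d) (hds : d - s < finrank ℝ E / p) (hs : s < finrank ℝ E / q) :
    ∃ C : ℝ, 0 < C ∧ ∀ f : E → ℝ≥0∞, AEMeasurable f μ →
      (∫⁻ x, ENNReal.ofReal (‖x‖ ^ (p * (s - d))) * rieszPotential μ d f x ^ p ∂μ) ^ (1 / p) ≤
        ENNReal.ofReal C *
          (∫⁻ x, ENNReal.ofReal (‖x‖ ^ (p * s)) * f x ^ p ∂μ) ^ (1 / p) := by
  obtain ⟨C, hC_top, hC⟩ := exists_lintegral_rpow_rieszPotential_le (μ := μ) hpq hd hds hs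
  have : Nontrivial E := nontrivial_of_finrank_cast_pos (by
    linarith [div_add_div_eq_of_holderConjugate hpq (finrank ℝ E : ℝ)])
  have hp : 0 ≤ 1 / p := one_div_nonneg.2 hpq.nonneg
  refine ⟨(C ^ (1 / p)).toReal + 1, by positivity, fun f hf => ?_⟩
  simp_rw [lintegral_ofReal_norm_rpow_mul_rpow hpq.nonneg]
  calc (∫⁻ x, (‖x‖ₑ ^ (s - d) * rieszPotential μ d f x) ^ p ∂μ) ^ (1 / p)
      ≤ (C * ∫⁻ x, (‖x‖ₑ ^ s * f x) ^ p ∂μ) ^ (1 / p) := by gcongr; exact hC f hf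
    _ = C ^ (1 / p) * (∫⁻ x, (‖x‖ₑ ^ s * f x) ^ p ∂μ) ^ (1 / p) :=
        ENNReal.mul_rpow_of_nonneg _ _ hp
    _ ≤ ENNReal.ofReal ((C ^ (1 / p)).toReal + 1) *
        (∫⁻ x, (‖x‖ₑ ^ s * f x) ^ p ∂μ) ^ (1 / p) := by
        gcongr
        rw [← ENNReal.ofReal_toReal (a := C ^ (1 / p)) (by finiteness)]
        exact ENNReal.ofReal_le_ofReal (by simp)

end RieszPotential

/-- Stein–Weiss estimate for the Newtonian potential. -/
theorem stein_weiss_newtonian_potential (s : ℝ) (hs1 : 1/2 < s) (hs2 : s < 3/2) :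
    ∃ C : ℝ, 0 < C ∧
      ∀ f : E3 → ℝ≥0∞, Measurable f →
        ∀ u : E3 → ℝ≥0∞, (∀ x, u x = ∫⁻ y : E3, f y / ENNReal.ofReal ‖x - y‖) →
          (∫⁻ x : E3, ENNReal.ofReal (‖x‖ ^ (2*(s - 2))) * (u x)^2) ^ (1/2 : ℝ) ≤
            ENNReal.ofReal C *
              (∫⁻ x : E3, ENNReal.ofReal (‖x‖ ^ (2*s)) * (f x)^2) ^ (1/2 : ℝ) := by
  obtain ⟨C, hC, h⟩ := stein_weiss_newtonian_potential_general (μ := (volume : Measure E3))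
    (d := 2) (s := s) .two_two two_pos (by simp; linarith) (by simpa using hs2)
  refine ⟨C, hC, fun f hf u hu => ?_⟩
  simpa only [hu, rieszPotential_two_euclideanSpace_fin_three, ENNReal.rpow_two] using
    h f hf.aemeasurable
end
end
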